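/- arXiv:1908.06794 — 4 statements merged into one kernel-verified Lean document; each statement's English description precedes it below -/
import Mathlib

section
/- Let n ≥ 2, 1 < k ≤ n, and let a ∈ ℝ^{n+1} \ {0}. For a continuous function f on S^n the following are equivalent: (i) ∫_{S^n ∩ ζ} f dH^{k−1} = 0 for every k-dimensional affine plane ζ parallel to the vector a and meeting the open unit ball B^{n+1}; (ii) f(R_a x) = −f(x) for every x ∈ S^n. -/
open MeasureTheory Metric Matrix
open scoped InnerProductSpace ENNReal

/-- `Euc m` is the Euclidean space `ℝ^m`. -/
abbrev Euc (m : ℕ) : Type := EuclideanSpace ℝ (Fin m)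

/-- The Möbius transformation `φ_b x = (b − P_b x − s_b Q_b x)/(1 − x·b)`,
where `P_b x = ((b·x)/|b|²) b`, `Q_b x = x − P_b x`, `s_b = √(1 − |b|²)`. -/
noncomputable def phiMap {n : ℕ} (b x : Euc (n + 1)) : Euc (n + 1) :=
  (1 - ⟪x, b⟫_ℝ)⁻¹ •
    (b - (⟪b, x⟫_ℝ / ‖b‖ ^ 2) • b -
      Real.sqrt (1 - ‖b‖ ^ 2) • (x - (⟪b, x⟫_ℝ / ‖b‖ ^ 2) • b))

/-- `a* = a/|a|²`, the inversion of `a` in the unit sphere. -/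
noncomputable def aStar {n : ℕ} (a : Euc (n + 1)) : Euc (n + 1) := (‖a‖ ^ 2)⁻¹ • a

/-- `s_{a*} = √(1 − |a*|²)`. -/
noncomputable def sStar {n : ℕ} (a : Euc (n + 1)) : ℝ := Real.sqrt (1 - ‖aStar a‖ ^ 2)

/-- The reflection `R_a x = x − 2((x·a)/|a|²) a` in the hyperplane `a^⊥`. -/
noncomputable def reflMap {n : ℕ} (a x : Euc (n + 1)) : Euc (n + 1) :=
  x - ((2 * ⟪x, a⟫_ℝ) / ‖a‖ ^ 2) • a

/-- `τ_a x = ((|a|² − 1) x + 2(1 − x·a) a)/|x − a|²`, the second point at which the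
line through `a` and `x` meets the unit sphere. -/
noncomputable def tauMap {n : ℕ} (a x : Euc (n + 1)) : Euc (n + 1) :=
  (‖x - a‖ ^ 2)⁻¹ • ((‖a‖ ^ 2 - 1) • x + (2 * (1 - ⟪x, a⟫_ℝ)) • a)


section General
variable {E : Type*} [NormedAddCommGroup E] [InnerProductSpace ℝ E] [FiniteDimensional ℝ E]

lemma exists_rot (V : Submodule ℝ E) {e y : E} (he : e ∈ V) (hy : y ∈ V) (h : ‖e‖ = ‖y‖) :
    ∃ g : E ≃ₗᵢ[ℝ] E, g e = y ∧ (∀ x ∈ V, g x ∈ V) ∧ (∀ x ∈ Vᗮ, g x = x) := by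
  refine ⟨(ℝ ∙ (e - y))ᗮ.reflection, Submodule.reflection_sub h, ?_, ?_⟩
  · intro x hx
    rw [Submodule.reflection_orthogonal_apply, Submodule.reflection_singleton_apply]
    exact V.neg_mem (V.sub_mem (V.smul_of_tower_mem 2 (V.smul_mem _ (V.sub_mem he hy))) hx)
  · intro x hx
    rw [Submodule.reflection_eq_self_iff, Submodule.mem_orthogonal_singleton_iff_inner_right]
    exact hx _ (V.sub_mem he hy)

lemma proj_comm (V : Submodule ℝ E) (g : E ≃ₗᵢ[ℝ] E) (h1 : ∀ x ∈ V, g x ∈ V)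
    (h2 : ∀ x ∈ Vᗮ, g x = x) (x : E) :
    V.starProjection (g x) = g (V.starProjection x) := by
  have : g x = g (V.starProjection x) + (x - V.starProjection x) := by
    rw [← h2 (x - V.starProjection x) (Submodule.sub_starProjection_mem_orthogonal x), ← map_add]
    congr 1; abel
  rw [this, map_add, Submodule.starProjection_eq_self_iff.2 (h1 _ (Submodule.starProjection_apply_mem _ _)),
    (Submodule.starProjection_apply_eq_zero_iff V).2
      (Submodule.sub_starProjection_mem_orthogonal x), add_zero]

variable [MeasurableSpace E] [BorelSpace E]

lemma avg_zero (V : Submodule ℝ E) (ν μ : Measure E) [IsFiniteMeasure ν] [IsFiniteMeasure μ]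
    (hνS : ∀ᵐ x ∂ν, ‖x‖ = 1) (hνinv : ∀ g : E ≃ₗᵢ[ℝ] E, MeasurePreserving g ν ν)
    (hνV : ∀ᵐ x ∂ν, V.starProjection x ≠ 0)
    (hμS : ∀ᵐ y ∂μ, y ∈ V ∧ ‖y‖ = 1)
    (hμinv : ∀ g : E ≃ₗᵢ[ℝ] E, (∀ x ∈ V, g x ∈ V) → MeasurePreserving g μ μ)
    (hμ0 : μ ≠ 0) (φ : E → ℂ) (hφ : Continuous φ) (C : ℝ) (hC : ∀ x, ‖φ x‖ ≤ C)
    (hzero : ∀ x, ‖x‖ = 1 → V.starProjection x ≠ 0 →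
      ∫ y, φ (‖V.starProjection x‖ • y + (x - V.starProjection x)) ∂μ = 0) :
    ∫ x, φ x ∂ν = 0 := by
  set P := V.starProjection with hP
  have hPc : Continuous P := P.continuous
  -- bound
  suffices H : ∀ δ > 0, ‖∫ x, φ x ∂ν‖ ≤ δ * ν.real Set.univ by
    have : ‖∫ x, φ x ∂ν‖ ≤ 0 := by
      refine le_of_forall_pos_le_add fun η hη => ?_
      have hn : 0 ≤ ν.real Set.univ := measureReal_nonneg
      refine (H (η / (ν.real Set.univ + 1)) (by positivity)).trans ?_
      rw [zero_add, div_mul_eq_mul_div, div_le_iff₀ (by positivity)]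
      nlinarith
    simpa using this
  intro δ hδ
  have huc : UniformContinuousOn φ (closedBall (0 : E) 2) :=
    (isCompact_closedBall _ _).uniformContinuousOn_of_continuous hφ.continuousOn
  obtain ⟨ε, hε, huc⟩ := Metric.uniformContinuousOn_iff.1 huc δ hδ
  have : NeZero μ := ⟨hμ0⟩
  obtain ⟨e, heV, he1⟩ := hμS.exists
  set D : Set (E × E) := {p | ‖P p.1 - ‖P p.1‖ • p.2‖ < ε * ‖P p.1‖} with hD
  have hDo : IsOpen D := isOpen_lt (by fun_prop) (by fun_prop)
  set kk : E → E → ℝ := fun x y => D.indicator (fun _ => (1 : ℝ)) (x, y) with hkk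
  have hkkm : Measurable (Function.uncurry kk) := measurable_const.indicator hDo.measurableSet
  have hkk0 : ∀ x y, 0 ≤ kk x y := fun x y => Set.indicator_nonneg (fun _ _ => zero_le_one) _
  have hkk1 : ∀ x y, kk x y ≤ 1 := fun x y => Set.indicator_le_self' (fun _ _ => zero_le_one) _
  have hkkn : ∀ x y, ‖kk x y‖ ≤ 1 := fun x y => by
    rw [Real.norm_of_nonneg (hkk0 x y)]; exact hkk1 x y
  set Z : E → E → E := fun x y => ‖P x‖ • y + (x - P x) with hZ
  have hZc : Continuous (Function.uncurry Z) := by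
    change Continuous fun p : E × E => ‖P p.1‖ • p.2 + (p.1 - P p.1)
    fun_prop
  have hball : ∀ e' ∈ V, ‖e'‖ = 1 → μ (ball e' ε) = μ (ball e ε) := by
    intro e' he' hn
    obtain ⟨g, hg, hgV, -⟩ := exists_rot V heV he' (he1.trans hn.symm)
    rw [← (hμinv g hgV).measure_preimage measurableSet_ball.nullMeasurableSet, ← hg,
      g.isometry.preimage_ball]
  set c : ℝ := μ.real (ball e ε) with hc
  have hcpos : 0 < c := by
    rw [hc, measureReal_def, ENNReal.toReal_pos_iff]
    refine ⟨pos_iff_ne_zero.2 fun h0 => hμ0 ?_, measure_lt_top _ _⟩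
    have hS : μ {y | y ∈ V ∧ ‖y‖ = 1} = 0 := by
      apply measure_null_of_locally_null
      intro x hx
      exact ⟨ball x ε, mem_nhdsWithin_of_mem_nhds (ball_mem_nhds _ hε), by
        rw [hball x hx.1 hx.2, h0]⟩
    rw [← Measure.measure_univ_eq_zero]
    rw [← nonpos_iff_eq_zero, ← Set.union_compl_self {y | y ∈ V ∧ ‖y‖ = 1}]
    refine (measure_union_le _ _).trans ?_
    rw [hS, zero_add]
    exact (ae_iff.1 hμS).le
  have hkkc : ∀ x, P x ≠ 0 → ∫ y, kk x y ∂μ = c := by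
    intro x hx
    have hpos : 0 < ‖P x‖ := norm_pos_iff.2 hx
    have hn : ‖‖P x‖⁻¹ • P x‖ = 1 := by
      rw [norm_smul, norm_inv, norm_norm, inv_mul_cancel₀ hpos.ne']
    have : kk x = (ball (‖P x‖⁻¹ • P x) ε).indicator (fun _ => (1 : ℝ)) := by
      funext y
      simp only [hkk, Set.indicator]
      congr 1
      simp only [hD, Set.mem_ofPred_eq, mem_ball, dist_eq_norm, eq_iff_iff]
      have h1 : P x - ‖P x‖ • y = -(‖P x‖ • (y - ‖P x‖⁻¹ • P x)) := by
        rw [smul_sub, smul_inv_smul₀ hpos.ne']; abel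
      rw [h1, norm_neg, norm_smul, norm_norm, mul_comm, mul_lt_mul_iff_left₀ hpos]
    rw [this, integral_indicator_const _ measurableSet_ball, smul_eq_mul, mul_one, hc,
      measureReal_def, measureReal_def,
      hball _ (V.smul_mem _ (Submodule.starProjection_apply_mem _ _)) hn]
  -- the swapped integral vanishes
  have hintb : ∀ F : E × E → ℂ, AEStronglyMeasurable F (ν.prod μ) → (∀ p, ‖F p‖ ≤ C) →
      Integrable F (ν.prod μ) := fun F hF hb =>
    Integrable.of_bound hF C (Filter.Eventually.of_forall hb)
  have hI1 : Integrable (Function.uncurry fun x y => kk x y • φ x) (ν.prod μ) := by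
    refine hintb _ ?_ ?_
    · exact (hkkm.aestronglyMeasurable).smul
        (hφ.comp continuous_fst).aestronglyMeasurable
    · rintro ⟨x, y⟩
      simp only [Function.uncurry, norm_smul]
      exact (mul_le_of_le_one_left (norm_nonneg _) (hkkn x y)).trans (hC x)
  have hI2 : Integrable (Function.uncurry fun x y => kk x y • φ (Z x y)) (ν.prod μ) := by
    refine hintb _ ?_ ?_
    · exact (hkkm.aestronglyMeasurable).smul (hφ.comp hZc).aestronglyMeasurable
    · rintro ⟨x, y⟩
      simp only [Function.uncurry, norm_smul]
      exact (mul_le_of_le_one_left (norm_nonneg _) (hkkn x y)).trans (hC _)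
  have hI3 : Integrable (Function.uncurry fun x y => kk x e • φ (Z x y)) (ν.prod μ) := by
    refine hintb _ ?_ ?_
    · refine AEStronglyMeasurable.smul (f := fun p : E × E => kk p.1 e) ?_
        (hφ.comp hZc).aestronglyMeasurable
      exact (hkkm.comp (measurable_fst.prodMk measurable_const)).aestronglyMeasurable
    · rintro ⟨x, y⟩
      simp only [Function.uncurry, norm_smul]
      exact (mul_le_of_le_one_left (norm_nonneg _) (hkkn x e)).trans (hC _)
  have hJ : ∫ x, ∫ y, kk x y • φ (Z x y) ∂μ ∂ν = 0 := by
    rw [integral_integral_swap hI2]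
    have h1 : ∀ᵐ y ∂μ, ∫ x, kk x y • φ (Z x y) ∂ν = ∫ x, kk x e • φ (Z x y) ∂ν := by
      filter_upwards [hμS] with y hy
      obtain ⟨g, hg, hgV, hgo⟩ := exists_rot V heV hy.1 (he1.trans hy.2.symm)
      rw [← (hνinv g).integral_comp g.toHomeomorph.measurableEmbedding]
      refine integral_congr_ae (Filter.Eventually.of_forall fun x => ?_)
      have hPg : P (g x) = g (P x) := proj_comm V g hgV hgo x
      have hZg : Z (g x) y = Z x y := by
        simp only [hZ, hPg, g.norm_map, ← map_sub]
        rw [hgo _ (Submodule.sub_starProjection_mem_orthogonal x)]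
      have hkg : kk (g x) y = kk x e := by
        simp only [hkk, Set.indicator]
        congr 1
        simp only [hD, Set.mem_ofPred_eq, hPg, g.norm_map, ← hg, ← map_smul, ← map_sub]
      simp only [hZg, hkg]
    rw [integral_congr_ae h1, ← integral_integral_swap hI3]
    refine integral_eq_zero_of_ae ?_
    filter_upwards [hνS, hνV] with x hx1 hx2
    rw [integral_smul, hzero x hx1 hx2, smul_zero]; rfl
  have hcI : c • ∫ x, φ x ∂ν = ∫ x, ∫ y, kk x y • φ x ∂μ ∂ν := by
    rw [← integral_smul]
    refine integral_congr_ae ?_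
    filter_upwards [hνV] with x hx
    rw [integral_smul_const, hkkc x hx]
  have hdiff : ‖c • ∫ x, φ x ∂ν‖ ≤ (δ * c) * ν.real Set.univ := by
    have : c • ∫ x, φ x ∂ν = ∫ x, (∫ y, (kk x y • φ x - kk x y • φ (Z x y)) ∂μ) ∂ν := by
      rw [hcI, ← sub_zero (∫ x, ∫ y, kk x y • φ x ∂μ ∂ν), ← hJ]
      exact (integral_integral_sub hI1 hI2).symm
    rw [this]
    refine norm_integral_le_of_norm_le_const ?_
    filter_upwards [hνS, hνV] with x hx1 hx2
    rw [← hkkc x hx2, ← integral_const_mul]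
    refine norm_integral_le_of_norm_le ?_ ?_
    · refine (Integrable.of_bound (C := 1) ?_ (Filter.Eventually.of_forall (hkkn x))).const_mul _
      exact (hkkm.comp (measurable_const.prodMk measurable_id)).aestronglyMeasurable
    · filter_upwards [hμS] with y hy
      rw [← smul_sub, norm_smul, Real.norm_of_nonneg (hkk0 x y), mul_comm]
      by_cases hxy : (x, y) ∈ D
      · refine mul_le_mul_of_nonneg_right ?_ (hkk0 x y)
        rw [← dist_eq_norm]
        have hPx : ‖P x‖ ≤ 1 := by
          rw [← hx1]; exact Submodule.norm_starProjection_apply_le V x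
        have hd : x - Z x y = P x - ‖P x‖ • y := by simp only [hZ]; abel
        refine (huc x ?_ _ ?_ ?_).le
        · simp [hx1]
        · rw [mem_closedBall_zero_iff]
          have h2 : ‖x - P x‖ ≤ 1 := by
            rw [← hx1, hP, ← Submodule.starProjection_orthogonal_val]
            exact Submodule.norm_starProjection_apply_le _ x
          have h3 : ‖‖P x‖ • y‖ ≤ 1 := by rw [norm_smul, norm_norm, hy.2, mul_one]; exact hPx
          exact (norm_add_le _ _).trans (by linarith)
        · rw [dist_eq_norm, hd]
          exact lt_of_lt_of_le hxy (mul_le_of_le_one_right hε.le hPx)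
      · have : kk x y = 0 := Set.indicator_of_notMem hxy _
        simp [this]
  rw [norm_smul, Real.norm_of_nonneg hcpos.le] at hdiff
  have : c * ‖∫ x, φ x ∂ν‖ ≤ c * (δ * ν.real Set.univ) := hdiff.trans_eq (by ring)
  exact le_of_mul_le_mul_left this hcpos
end General

section General2
variable {E : Type*} [NormedAddCommGroup E] [InnerProductSpace ℝ E] [FiniteDimensional ℝ E]
  [MeasurableSpace E] [BorelSpace E]

/-- Radial projection. -/
noncomputable def radl (x : E) : E := ‖x‖⁻¹ • x

lemma radl_meas : Measurable (radl : E → E) := by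
  unfold radl; fun_prop

/-- An isometry invariant finite measure on the unit sphere. -/
noncomputable def nuS (E : Type*) [NormedAddCommGroup E] [InnerProductSpace ℝ E]
    [FiniteDimensional ℝ E] [MeasurableSpace E] [BorelSpace E] : Measure E :=
  ((volume : Measure E).restrict (ball 0 1)).map radl

instance : IsFiniteMeasure (nuS E) := by
  have : IsFiniteMeasure ((volume : Measure E).restrict (ball 0 1)) :=
    ⟨by rw [Measure.restrict_apply_univ]; exact measure_ball_lt_top⟩
  unfold nuS; infer_instance

lemma nuS_null (W : Submodule ℝ E) (hW : W ≠ ⊤) : ∀ᵐ x ∂(nuS E), x ∉ W := by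
  unfold nuS
  rw [ae_map_iff radl_meas.aemeasurable
    (p := fun x => x ∉ W) (W.closed_of_finiteDimensional.measurableSet.compl)]
  refine ae_restrict_of_ae ?_
  have h0 : (volume : Measure E) W = 0 := Measure.addHaar_submodule _ W hW
  filter_upwards [measure_eq_zero_iff_ae_notMem.1 h0] with x hx h
  apply hx
  by_cases hx0 : x = 0
  · rw [hx0]; exact W.zero_mem
  · have := W.smul_mem ‖x‖ h
    rwa [radl, smul_inv_smul₀ (norm_ne_zero_iff.2 hx0)] at this

lemma nuS_sphere [Nontrivial E] : ∀ᵐ x ∂(nuS E), ‖x‖ = 1 := by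
  unfold nuS
  rw [ae_map_iff radl_meas.aemeasurable (measurableSet_eq_fun (by fun_prop) (by fun_prop))]
  refine ae_restrict_of_ae ?_
  filter_upwards [Measure.ae_ne volume (0 : E)] with x hx
  rw [radl, norm_smul, norm_inv, norm_norm, inv_mul_cancel₀ (norm_ne_zero_iff.2 hx)]

lemma nuS_inv (g : E ≃ₗᵢ[ℝ] E) : MeasurePreserving g (nuS E) (nuS E) := by
  have hgm : Measurable g := g.continuous.measurable
  refine ⟨hgm, ?_⟩
  unfold nuS
  rw [Measure.map_map hgm radl_meas]
  have h1 : (g ∘ radl : E → E) = radl ∘ g := by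
    funext x; simp [radl]
  rw [h1, ← Measure.map_map radl_meas hgm]
  congr 1
  have h2 := (g.measurePreserving).restrict_preimage (s := ball (0 : E) 1) measurableSet_ball
  have h3 : g ⁻¹' ball (0 : E) 1 = ball 0 1 := by
    ext x; simp
  rw [h3] at h2
  exact h2.map_eq

/-- full support -/
lemma nuS_ae_zero [Nontrivial E] (G : E → ℝ) (hG : Continuous G) (h : ∀ᵐ x ∂(nuS E), G x = 0)
    (x : E) (hx : ‖x‖ = 1) : G x = 0 := by
  by_contra hne
  unfold nuS at h
  rw [ae_map_iff radl_meas.aemeasurable (measurableSet_eq_fun hG.measurable (by fun_prop)),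
    ae_restrict_iff' measurableSet_ball] at h
  have hx0 : x ≠ 0 := by rintro rfl; simp at hx
  have hrc : ContinuousOn (radl : E → E) {0}ᶜ := by
    unfold radl
    exact (continuous_norm.continuousOn.inv₀ (by simp)).smul continuousOn_id
  have hU : IsOpen ({0}ᶜ ∩ (fun x => G (radl x)) ⁻¹' {0}ᶜ : Set E) :=
    (hG.comp_continuousOn hrc).isOpen_inter_preimage isOpen_compl_singleton isOpen_compl_singleton
  have hU2 := hU.inter (isOpen_ball (x := (0 : E)) (ε := 1))
  have hpos := hU2.measure_pos volume ⟨(1 / 2 : ℝ) • x, ⟨by simp [hx0], by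
    simp [radl, norm_smul, hx, smul_smul, hne]⟩, by simp [norm_smul, hx]; norm_num⟩
  refine hpos.ne' (measure_mono_null ?_ (ae_iff.1 h))
  rintro y ⟨⟨-, hy⟩, hyb⟩ hh
  exact hy (hh hyb)

variable (V : Submodule ℝ E)

lemma finrank_inter {p : E} (hpV : p ∈ V) (hp : p ≠ 0) :
    Module.finrank ℝ (V ⊓ (ℝ ∙ p)ᗮ : Submodule ℝ E) + 1 = Module.finrank ℝ V := by
  have h := Submodule.finrank_add_inf_finrank_orthogonal (K₁ := ℝ ∙ p) (K₂ := V)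
    ((Submodule.span_singleton_le_iff_mem _ _).2 hpV)
  rw [finrank_span_singleton hp, inf_comm] at h
  omega

lemma hm_sphere_lt_top (k : ℕ) (hk : 1 < k) (hV : Module.finrank ℝ V = k) :
    μH[(k : ℝ) - 1] (sphere (0 : E) 1 ∩ V) < ∞ := by
  have hcpt : IsCompact (sphere (0 : E) 1 ∩ V) :=
    (isCompact_sphere _ _).inter_right V.closed_of_finiteDimensional
  refine hcpt.measure_lt_top_of_nhdsWithin fun p hp => ?_
  have hp1 : ‖p‖ = 1 := by simpa using hp.1
  have hp0 : p ≠ 0 := by rintro rfl; simp at hp1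
  set U : Submodule ℝ E := V ⊓ (ℝ ∙ p)ᗮ with hU
  have hUr : (Module.finrank ℝ U : ℝ) = (k : ℝ) - 1 := by
    rw [← hV, ← finrank_inter V hp.2 hp0]; push_cast; ring
  have hpU : ∀ u : U, ⟪p, (u : E)⟫_ℝ = 0 := fun u =>
    (Submodule.mem_orthogonal_singleton_iff_inner_right).1 u.2.2
  have hne : ∀ u : U, p + u ≠ 0 := by
    intro u h
    have : ⟪p, p + u⟫_ℝ = 1 := by
      rw [inner_add_right, hpU, real_inner_self_eq_norm_sq, hp1]; norm_num
    rw [h, inner_zero_right] at this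
    norm_num at this
  set Φ : U → E := fun u => ‖p + (u : E)‖⁻¹ • (p + (u : E)) with hΦ
  have hsm : ContDiff ℝ 1 Φ := by
    have h1 : ContDiff ℝ 1 (fun u : U => p + (u : E)) :=
      contDiff_const.add U.subtypeL.contDiff
    exact ((h1.norm ℝ hne).inv fun u => norm_ne_zero_iff.2 (hne u)).smul h1
  obtain ⟨K, t, ht, hK⟩ := hsm.locallyLipschitz 0
  obtain ⟨ρ, hρ, hρt⟩ := Metric.mem_nhds_iff.1 ht
  refine ⟨Φ '' ball 0 ρ, ?_, ?_⟩
  · -- neighbourhood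
    have hT : ContinuousAt (fun x : E => (⟪p, x⟫_ℝ)⁻¹ • x - p) p := by
      refine ContinuousAt.sub (ContinuousAt.smul (ContinuousAt.inv₀ (by fun_prop) ?_)
        continuousAt_id) continuousAt_const
      simp [hp1]
    have hTp : ((⟪p, p⟫_ℝ)⁻¹ • p - p : E) = 0 := by simp [hp1]
    have h1 : ∀ᶠ x in nhds p, (⟪p, x⟫_ℝ)⁻¹ • x - p ∈ ball (0 : E) ρ := by
      apply hT.eventually_mem
      rw [hTp]; exact ball_mem_nhds _ hρ
    have h2 : ∀ᶠ x in nhds p, 0 < ⟪p, x⟫_ℝ := by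
      have : ContinuousAt (fun x : E => ⟪p, x⟫_ℝ) p := by fun_prop
      exact this.eventually_const_lt (by simp [hp1])
    filter_upwards [mem_nhdsWithin_of_mem_nhds h1, mem_nhdsWithin_of_mem_nhds h2,
      self_mem_nhdsWithin] with x hx1 hx2 hx3
    have hxn : ‖x‖ = 1 := by simpa using hx3.1
    have hx2' : 0 < ⟪p, x⟫_ℝ := hx2
    have huU : (⟪p, x⟫_ℝ)⁻¹ • x - p ∈ U := by
      refine ⟨V.sub_mem (V.smul_mem _ hx3.2) hp.2, ?_⟩
      refine (Submodule.mem_orthogonal_singleton_iff_inner_right).2 ?_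
      rw [inner_sub_right, inner_smul_right, inv_mul_cancel₀ hx2'.ne', real_inner_self_eq_norm_sq,
        hp1]; norm_num
    refine ⟨⟨_, huU⟩, ?_, ?_⟩
    · have : ‖(⟪p, x⟫_ℝ)⁻¹ • x - p‖ < ρ := by simpa using hx1
      simpa using this
    · simp only [hΦ, add_sub_cancel, norm_smul, hxn, norm_inv, Real.norm_of_nonneg hx2'.le, mul_one,
        inv_inv]
      exact smul_inv_smul₀ hx2'.ne' x
  · rw [← hUr]
    refine ((hK.mono hρt).hausdorffMeasure_image_le (by positivity)).trans_lt ?_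
    refine ENNReal.mul_lt_top ?_ measure_ball_lt_top
    exact ENNReal.rpow_lt_top_of_nonneg (by positivity) (by simp)

lemma hm_sphere_pos (k : ℕ) (hk : 1 < k) (hV : Module.finrank ℝ V = k) :
    μH[(k : ℝ) - 1] (sphere (0 : E) 1 ∩ V) ≠ 0 := by
  have hnt : Nontrivial V := Module.nontrivial_of_finrank_pos (R := ℝ) (by omega)
  obtain ⟨⟨p, hpV⟩, hp1⟩ := exists_norm_eq V zero_le_one
  replace hp1 : ‖p‖ = 1 := hp1
  have hp0 : p ≠ 0 := by rintro rfl; simp at hp1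
  set U : Submodule ℝ E := V ⊓ (ℝ ∙ p)ᗮ with hU
  have hUr : (Module.finrank ℝ U : ℝ) = (k : ℝ) - 1 := by
    rw [← hV, ← finrank_inter V hpV hp0]; push_cast; ring
  have hpU : ∀ u : U, ⟪p, (u : E)⟫_ℝ = 0 := fun u =>
    (Submodule.mem_orthogonal_singleton_iff_inner_right).1 u.2.2
  intro h0
  rw [← hUr] at h0
  have hlip : LipschitzWith 1 (U.orthogonalProjectionOnto : E → U) :=
    U.lipschitzWith_orthogonalProjectionOnto
  have h1 := hlip.hausdorffMeasure_image_le (d := Module.finrank ℝ U) (by positivity)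
    (sphere (0 : E) 1 ∩ V)
  rw [h0, mul_zero] at h1
  have h2 : ball (0 : U) 1 ⊆ U.orthogonalProjectionOnto '' (sphere (0 : E) 1 ∩ V) := by
    intro u hu
    have hun : ‖(u : E)‖ < 1 := by simpa using hu
    refine ⟨u + Real.sqrt (1 - ‖(u : E)‖ ^ 2) • p, ⟨?_, ?_⟩, ?_⟩
    · have hs : 0 ≤ 1 - ‖(u : E)‖ ^ 2 := by nlinarith [norm_nonneg (u : E)]
      have : ‖(u : E) + Real.sqrt (1 - ‖(u : E)‖ ^ 2) • p‖ ^ 2 = 1 := by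
        rw [norm_add_sq_real, inner_smul_right, real_inner_comm, hpU, norm_smul, hp1, mul_one,
          Real.norm_of_nonneg (Real.sqrt_nonneg _), Real.sq_sqrt hs]; ring
      rw [mem_sphere_zero_iff_norm]
      exact (sq_eq_sq₀ (norm_nonneg _) zero_le_one).1 (this.trans (one_pow 2).symm)
    · exact V.add_mem u.2.1 (V.smul_mem _ hpV)
    · rw [map_add, map_smul, Submodule.orthogonalProjectionOnto_mem_subspace_eq_self,
        (Submodule.orthogonalProjectionOnto_eq_zero_iff).2, smul_zero, add_zero]
      intro v hv
      rw [real_inner_comm]; exact hpU ⟨v, hv⟩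
  have h3 : μH[(Module.finrank ℝ U : ℝ)] (ball (0 : U) 1) = 0 :=
    le_antisymm ((measure_mono h2).trans h1) zero_le
  exact (measure_ball_pos _ _ one_pos).ne' h3

lemma hm_inv (s : ℝ) (g : E ≃ₗᵢ[ℝ] E) (T : Set E) (h : g ⁻¹' T = T) (hT : MeasurableSet T) :
    MeasurePreserving g ((μH[s] : Measure E).restrict T) ((μH[s] : Measure E).restrict T) := by
  have := (g.toIsometryEquiv.measurePreserving_hausdorffMeasure s).restrict_preimage hT
  change MeasurePreserving g ((μH[s] : Measure E).restrict (g ⁻¹' T)) _ at this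
  rwa [h] at this

lemma preimage_V (g : E ≃ₗᵢ[ℝ] E) (h : ∀ x ∈ V, g x ∈ V) (x : E) : g x ∈ V ↔ x ∈ V := by
  refine ⟨fun hx => ?_, h x⟩
  have h1 : V.map (g.toLinearEquiv : E →ₗ[ℝ] E) = V := by
    apply Submodule.eq_of_le_of_finrank_eq
    · rintro _ ⟨y, hy, rfl⟩; exact h y hy
    · exact LinearEquiv.finrank_map_eq g.toLinearEquiv V
  rw [← h1] at hx
  obtain ⟨y, hy, hyx⟩ := hx
  have : y = x := g.injective hyx
  rwa [← this]

open scoped Pointwise in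
/-- Sections of the sphere are scaled copies of the unit sphere of the direction. -/
lemma section_integral (s : ℝ) (hs : 0 ≤ s) (d : E) (hd : d ∈ Vᗮ) (r : ℝ) (hr : 0 < r)
    (hdr : ‖d‖ ^ 2 + r ^ 2 = 1) (f : E → ℝ)
    (h : ∫ x in sphere (0 : E) 1 ∩ (AffineSubspace.mk' d V : Set E), f x ∂μH[s] = 0) :
    ∫ y in sphere (0 : E) 1 ∩ V, f (r • y + d) ∂μH[s] = 0 := by
  set e : E ≃ₜ E := (Homeomorph.smulOfNeZero r hr.ne').trans (Homeomorph.addRight d) with he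
  have hex : ∀ y, e y = r • y + d := fun y => rfl
  have hmap : (μH[s] : Measure E) = (‖r‖₊ ^ s : NNReal) • (μH[s] : Measure E).map e := by
    ext A hA
    rw [Measure.smul_apply, Measure.map_apply e.continuous.measurable hA]
    have hA2 : A = IsometryEquiv.addRight d '' (r • (e ⁻¹' A)) := by
      ext x
      constructor
      · intro hx
        refine ⟨x - d, ⟨r⁻¹ • (x - d), ?_, ?_⟩, ?_⟩
        · simp [hex, smul_inv_smul₀ hr.ne', hx]
        · simp [smul_inv_smul₀ hr.ne']
        · simp
      · rintro ⟨_, ⟨y, hy, rfl⟩, rfl⟩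
        exact hy
    conv_lhs => rw [hA2]
    rw [(IsometryEquiv.addRight d).isometry.hausdorffMeasure_image (Or.inl hs),
      Measure.hausdorffMeasure_smul₀ hs hr.ne']
  have hpre : e ⁻¹' (sphere (0 : E) 1 ∩ (AffineSubspace.mk' d V : Set E)) =
      sphere (0 : E) 1 ∩ V := by
    ext y
    simp only [Set.mem_preimage, Set.mem_inter_iff, hex, mem_sphere_zero_iff_norm,
      SetLike.mem_coe, AffineSubspace.mem_mk', vsub_eq_sub, add_sub_cancel_right]
    have hV : r • y ∈ V ↔ y ∈ V := V.smul_mem_iff hr.ne'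
    rw [hV]
    refine and_congr_left fun hy => ?_
    have h1 : ‖r • y + d‖ ^ 2 = r ^ 2 * ‖y‖ ^ 2 + ‖d‖ ^ 2 := by
      rw [norm_add_sq_real, inner_smul_left, hd y hy, norm_smul, Real.norm_of_nonneg hr.le]
      simp; ring
    rw [← sq_eq_sq₀ (norm_nonneg _) zero_le_one, ← sq_eq_sq₀ (norm_nonneg y) zero_le_one, h1]
    constructor
    · intro h2
      have : r ^ 2 * (‖y‖ ^ 2 - 1) = 0 := by linarith
      rcases mul_eq_zero.1 this with h3 | h3
      · exact absurd h3 (by positivity)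
      · linarith
    · intro h2; rw [h2]; linarith
  rw [hmap, Measure.restrict_smul, integral_smul_nnreal_measure, smul_eq_zero] at h
  rcases h with h | h
  · exact absurd h (by have : 0 < ‖r‖₊ := by simpa using hr.ne'
                       positivity)
  rw [e.measurableEmbedding.setIntegral_map, hpre] at h
  exact h

lemma exists_subm_between (A B : Submodule ℝ E) (hAB : A ≤ B) (k : ℕ)
    (h1 : Module.finrank ℝ A ≤ k) (h2 : k ≤ Module.finrank ℝ B) :
    ∃ V : Submodule ℝ E, A ≤ V ∧ V ≤ B ∧ Module.finrank ℝ V = k := by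
  induction k, h1 using Nat.le_induction with
  | base => exact ⟨A, le_rfl, hAB, rfl⟩
  | succ m hm ih =>
    obtain ⟨V, hAV, hVB, hV⟩ := ih (by omega)
    have hlt : V < B := lt_of_le_of_ne hVB (by rintro rfl; omega)
    obtain ⟨x, hxB, hxV⟩ := SetLike.exists_of_lt hlt
    refine ⟨V ⊔ ℝ ∙ x, hAV.trans le_sup_left,
      sup_le hVB ((Submodule.span_singleton_le_iff_mem _ _).2 hxB), ?_⟩
    have := Submodule.finrank_sup_add_finrank_inf_eq V (ℝ ∙ x)
    have hb : V ⊓ ℝ ∙ x = ⊥ := by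
      rw [Submodule.eq_bot_iff]
      rintro y ⟨hyV, hyx⟩
      obtain ⟨t, rfl⟩ := Submodule.mem_span_singleton.1 hyx
      by_contra hne
      have ht : t ≠ 0 := by rintro rfl; simp at hne
      exact hxV ((V.smul_mem_iff ht).1 hyV)
    rw [hb, finrank_span_singleton (by rintro rfl; exact hxV V.zero_mem), finrank_bot] at this
    omega
end General2

section General3
variable {E : Type*} [NormedAddCommGroup E] [InnerProductSpace ℝ E] [FiniteDimensional ℝ E]
  [MeasurableSpace E] [BorelSpace E]

lemma slice_fourier_zero (k : ℕ) (hk : 1 < k) (hkn : k < Module.finrank ℝ E) (a : E)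
    (f : E → ℝ) (hf : Continuous f) (C : ℝ) (hC : ∀ x, ‖f x‖ ≤ C)
    (H : ∀ ζ : AffineSubspace ℝ E,
        Module.finrank ℝ ζ.direction = k → a ∈ ζ.direction →
        (∃ z ∈ ζ, ‖z‖ < 1) →
        (∫ x in sphere (0 : E) 1 ∩ (ζ : Set E), f x ∂μH[(k : ℝ) - 1]) = 0)
    (w : E) (hw : ⟪w, a⟫_ℝ = 0) :
    ∫ x, (f x : ℂ) * Complex.exp (⟪x, w⟫_ℝ * Complex.I) ∂(nuS E) = 0 := by
  have hnt : Nontrivial E := Module.nontrivial_of_finrank_pos (R := ℝ) (by omega)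
  have hspan : ∀ v : E, Module.finrank ℝ (ℝ ∙ v) ≤ 1 := fun v => by
    have := finrank_span_le_card (R := ℝ) ({v} : Set E)
    simpa using this
  obtain ⟨V, haV, hVw, hVk⟩ := exists_subm_between (ℝ ∙ a) (ℝ ∙ w)ᗮ
    ((Submodule.span_singleton_le_iff_mem _ _).2
      (Submodule.mem_orthogonal_singleton_iff_inner_right.2 hw)) k
    ((hspan a).trans hk.le) (by
      have h1 := Submodule.finrank_add_finrank_orthogonal (ℝ ∙ w)
      have h2 := hspan w
      omega)
  have haV' : a ∈ V := (Submodule.span_singleton_le_iff_mem _ _).1 haV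
  have hwV : ∀ y ∈ V, ⟪y, w⟫_ℝ = 0 := fun y hy => by
    rw [real_inner_comm]
    exact Submodule.mem_orthogonal_singleton_iff_inner_right.1 (hVw hy)
  have hmeas : MeasurableSet (sphere (0 : E) 1 ∩ V) :=
    (isClosed_sphere.inter V.closed_of_finiteDimensional).measurableSet
  have hfin : IsFiniteMeasure ((μH[(k : ℝ) - 1] : Measure E).restrict (sphere (0 : E) 1 ∩ V)) :=
    ⟨by rw [Measure.restrict_apply_univ]; exact hm_sphere_lt_top V k hk hVk⟩
  refine avg_zero V (nuS E) ((μH[(k : ℝ) - 1] : Measure E).restrict (sphere (0 : E) 1 ∩ V))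
    nuS_sphere nuS_inv ?_ ?_ ?_ ?_ _ (by fun_prop) C ?_ ?_
  · have hne : Vᗮ ≠ ⊤ := by
      intro h
      rw [Submodule.orthogonal_eq_top_iff] at h
      rw [h, finrank_bot] at hVk
      omega
    filter_upwards [nuS_null Vᗮ hne] with x hx h
    exact hx ((Submodule.starProjection_apply_eq_zero_iff V).1 h)
  · filter_upwards [ae_restrict_mem hmeas] with y hy
    exact ⟨hy.2, by simpa using hy.1⟩
  · intro g hg
    refine hm_inv _ g _ ?_ hmeas
    ext x
    simp [preimage_V V g hg]
  · rw [Ne, Measure.restrict_eq_zero]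
    exact hm_sphere_pos V k hk hVk
  · intro x
    rw [norm_mul, Complex.norm_exp_ofReal_mul_I, mul_one, Complex.norm_real]
    exact hC x
  · intro x hx hPx
    set d := x - V.starProjection x with hd
    have hdo : d ∈ Vᗮ := Submodule.sub_starProjection_mem_orthogonal x
    have hr : 0 < ‖V.starProjection x‖ := norm_pos_iff.2 hPx
    have hpy : ‖d‖ ^ 2 + ‖V.starProjection x‖ ^ 2 = 1 := by
      have h1 : x = V.starProjection x + d := by rw [hd]; abel
      have h2 : ‖x‖ ^ 2 = 1 := by rw [hx, one_pow]
      rw [h1, norm_add_sq_real, hdo _ (Submodule.starProjection_apply_mem _ _)] at h2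
      linarith
    have hd1 : ‖d‖ < 1 := by
      have := pow_pos hr 2
      nlinarith [norm_nonneg d]
    have h0 := section_integral V ((k : ℝ) - 1)
      (by have : (1 : ℝ) < k := by exact_mod_cast hk
          linarith) d hdo _ hr hpy f
      (H (AffineSubspace.mk' d V) (by rw [AffineSubspace.direction_mk', hVk])
        (by rwa [AffineSubspace.direction_mk']) ⟨d, AffineSubspace.self_mem_mk' d V, hd1⟩)
    have h1 : ∀ᵐ y ∂((μH[(k : ℝ) - 1] : Measure E).restrict (sphere (0 : E) 1 ∩ V)),
        (f (‖V.starProjection x‖ • y + d) : ℂ) *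
          Complex.exp (⟪‖V.starProjection x‖ • y + d, w⟫_ℝ * Complex.I) =
        (f (‖V.starProjection x‖ • y + d) : ℂ) * Complex.exp (⟪d, w⟫_ℝ * Complex.I) := by
      filter_upwards [ae_restrict_mem hmeas] with y hy
      rw [inner_add_left, inner_smul_left, hwV y hy.2]
      simp
    rw [integral_congr_ae h1, integral_mul_const, integral_complex_ofReal, h0]
    simp

lemma refl_of_fourier [Nontrivial E] (a : E) (ha : a ≠ 0)
    (f : E → ℝ) (hf : Continuous f) (C : ℝ) (hC : ∀ x, ‖f x‖ ≤ C)
    (H : ∀ w : E, ⟪w, a⟫_ℝ = 0 →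
      ∫ x, (f x : ℂ) * Complex.exp (⟪x, w⟫_ℝ * Complex.I) ∂(nuS E) = 0)
    (x : E) (hx : ‖x‖ = 1) : f ((ℝ ∙ a)ᗮ.reflection x) = - f x := by
  set Q := (ℝ ∙ a)ᗮ.starProjection with hQ
  set R := (ℝ ∙ a)ᗮ.reflection with hR
  have hQc : Continuous Q := Q.continuous
  set ν := nuS E with hν
  have hfi : Integrable f ν := Integrable.of_bound hf.aestronglyMeasurable C
    (Filter.Eventually.of_forall hC)
  have hf1 : Measurable fun x => ENNReal.ofReal (f x) := hf.measurable.ennreal_ofReal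
  have hf2 : Measurable fun x => ENNReal.ofReal (-f x) := hf.neg.measurable.ennreal_ofReal
  have fin1 : IsFiniteMeasure (ν.withDensity fun x => ENNReal.ofReal (f x)) :=
    isFiniteMeasure_withDensity_ofReal hfi.2
  have fin2 : IsFiniteMeasure (ν.withDensity fun x => ENNReal.ofReal (-f x)) :=
    isFiniteMeasure_withDensity_ofReal hfi.neg.2
  -- difference formula
  have key : ∀ (F : E → ℂ), Continuous F → (∃ M, ∀ x, ‖x‖ ≤ 1 → ‖F x‖ ≤ M) →
      ∫ y, F y ∂((ν.withDensity fun x => ENNReal.ofReal (f x)).map Q) -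
      ∫ y, F y ∂((ν.withDensity fun x => ENNReal.ofReal (-f x)).map Q) =
      ∫ x, (f x : ℂ) * F (Q x) ∂ν := by
    rintro F hF ⟨M, hM⟩
    have hb : ∀ᵐ x ∂ν, ‖F (Q x)‖ ≤ M := by
      filter_upwards [nuS_sphere (E := E)] with x hx
      exact hM _ ((Submodule.norm_starProjection_apply_le _ x).trans_eq hx)
    have hm : AEStronglyMeasurable (fun x => F (Q x)) ν := (hF.comp hQc).aestronglyMeasurable
    rw [integral_map hQc.measurable.aemeasurable hF.aestronglyMeasurable,
      integral_map hQc.measurable.aemeasurable hF.aestronglyMeasurable,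
      integral_withDensity_eq_integral_toReal_smul hf1 (by simp),
      integral_withDensity_eq_integral_toReal_smul hf2 (by simp), ← integral_sub]
    · refine integral_congr_ae (Filter.Eventually.of_forall fun x => ?_)
      simp only
      rw [← sub_smul, Complex.real_smul]
      congr 2
      rw [ENNReal.toReal_ofReal', ENNReal.toReal_ofReal']
      rcases le_total 0 (f x) with h | h
      · rw [max_eq_left h, max_eq_right (by linarith)]; ring
      · rw [max_eq_right h, max_eq_left (by linarith)]; ring
    · refine Integrable.smul_bdd (φ := fun x => (ENNReal.ofReal (f x)).toReal) ?_ M hm hb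
      simp only [ENNReal.toReal_ofReal']
      exact hfi.pos_part
    · refine Integrable.smul_bdd (φ := fun x => (ENNReal.ofReal (-f x)).toReal) ?_ M hm hb
      simp only [ENNReal.toReal_ofReal']
      exact hfi.neg.pos_part
  have hmeq : (ν.withDensity fun x => ENNReal.ofReal (f x)).map Q =
      (ν.withDensity fun x => ENNReal.ofReal (-f x)).map Q := by
    apply Measure.ext_of_charFun
    funext t
    rw [charFun_apply, charFun_apply, ← sub_eq_zero, key _ (by fun_prop)]
    · have h1 : ⟪Q t, a⟫_ℝ = 0 := by
        have : Q t ∈ (ℝ ∙ a)ᗮ := Submodule.starProjection_apply_mem _ _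
        rw [real_inner_comm]
        exact Submodule.mem_orthogonal_singleton_iff_inner_right.1 this
      rw [← H (Q t) h1]
      congr 1; funext x
      rw [hQ, Submodule.inner_starProjection_left_eq_right]
    · exact ⟨1, fun x _ => by rw [Complex.norm_exp_ofReal_mul_I]⟩
  set b : E := ‖a‖⁻¹ • a with hb
  have hb1 : ‖b‖ = 1 := by
    rw [hb, norm_smul, norm_inv, norm_norm, inv_mul_cancel₀ (norm_ne_zero_iff.2 ha)]
  have hbspan : (ℝ ∙ b) = ℝ ∙ a := by
    rw [hb]; exact Submodule.span_singleton_smul_eq (by simp [ha]) a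
  have hdec : ∀ x, x = Q x + ⟪b, x⟫_ℝ • b := by
    intro x
    have h := Submodule.starProjection_add_starProjection_orthogonal (K := ℝ ∙ a) x
    rw [← hQ] at h
    have h2 : (ℝ ∙ a).starProjection x = ⟪b, x⟫_ℝ • b := by
      simp_rw [← hbspan]
      exact Submodule.starProjection_unit_singleton ℝ hb1 x
    rw [h2] at h
    rw [add_comm]; exact h.symm
  have hRx : ∀ x, R x = Q x - ⟪b, x⟫_ℝ • b := by
    intro x
    rw [hR, Submodule.reflection_apply, ← hQ, two_smul]
    conv_lhs => rw [sub_eq_add_neg]; arg 2; rw [hdec x]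
    abel
  have hQb : ∀ x, ⟪Q x, b⟫_ℝ = 0 := by
    intro x
    have : Q x ∈ (ℝ ∙ a)ᗮ := Submodule.starProjection_apply_mem _ _
    rw [hb, inner_smul_right, real_inner_comm,
      Submodule.mem_orthogonal_singleton_iff_inner_right.1 this, mul_zero]
  set h : E → ℝ := fun y => Real.sqrt (1 - ‖y‖ ^ 2) with hh
  set g : E → ℝ := fun y => f (y + h y • b) + f (y - h y • b) with hg
  have hgc : Continuous g := by
    have : Continuous h := by rw [hh]; fun_prop
    rw [hg]; fun_prop
  have hgQ : ∀ x, ‖x‖ = 1 → g (Q x) = f x + f (R x) := by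
    intro x hx
    have h1 : ⟪b, x⟫_ℝ ^ 2 = 1 - ‖Q x‖ ^ 2 := by
      have h2 : ‖x‖ ^ 2 = 1 := by rw [hx, one_pow]
      rw [hdec x, norm_add_sq_real, inner_smul_right, hQb, norm_smul, hb1, mul_one,
        Real.norm_eq_abs, sq_abs] at h2
      linarith
    have h3 : h (Q x) = |⟪b, x⟫_ℝ| := by
      simp only [hh]; rw [← h1, Real.sqrt_sq_eq_abs]
    have h4 : f x = f (Q x + ⟪b, x⟫_ℝ • b) := by rw [← hdec x]
    rw [hg, h4, hRx]
    simp only [h3]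
    rcases abs_choice ⟪b, x⟫_ℝ with h5 | h5
    · rw [h5]
    · rw [h5, neg_smul, sub_neg_eq_add, ← sub_eq_add_neg, add_comm]
  have hgb : ∀ y, ‖g y‖ ≤ C + C := fun y => (norm_add_le _ _).trans (add_le_add (hC _) (hC _))
  have hI : ∫ x, f x * g (Q x) ∂ν = 0 := by
    have := key (fun y => (g y : ℂ)) (by fun_prop) ⟨C + C, fun x _ => by
      rw [Complex.norm_real]; exact hgb x⟩
    rw [hmeq, sub_self] at this
    have h2 : ((∫ x, f x * g (Q x) ∂ν : ℝ) : ℂ) = 0 := by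
      rw [← integral_complex_ofReal, this]
      simp
    exact_mod_cast h2
  set G : E → ℝ := fun x => f x + f (R x) with hG
  have hRc : Continuous R := R.continuous
  have hGc : Continuous G := by rw [hG]; fun_prop
  have hGb : ∀ y, ‖G y‖ ≤ C + C := fun y => (norm_add_le _ _).trans (add_le_add (hC _) (hC _))
  have hGR : ∀ x, G (R x) = G x := by
    intro x
    simp only [hG]
    rw [hR, Submodule.reflection_reflection, add_comm]
  have hI2 : ∫ x, f x * G x ∂ν = 0 := by
    rw [← hI]
    refine integral_congr_ae ?_
    filter_upwards [nuS_sphere (E := E)] with x hx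
    rw [hgQ x hx]
  have hI3 : ∫ x, f (R x) * G x ∂ν = 0 := by
    rw [← hI2, ← (nuS_inv R).integral_comp R.toHomeomorph.measurableEmbedding]
    refine integral_congr_ae (Filter.Eventually.of_forall fun x => ?_)
    simp only [hGR]
    rw [hR, Submodule.reflection_reflection]
  have hfG : Integrable (fun x => f x * G x) ν :=
    Integrable.of_bound (hf.mul hGc).aestronglyMeasurable (C * (C + C))
      (Filter.Eventually.of_forall fun x => by
        rw [norm_mul]
        exact mul_le_mul (hC _) (hGb _) (norm_nonneg _) ((norm_nonneg _).trans (hC x)))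
  have hfRG : Integrable (fun x => f (R x) * G x) ν :=
    Integrable.of_bound ((hf.comp hRc).mul hGc).aestronglyMeasurable (C * (C + C))
      (Filter.Eventually.of_forall fun x => by
        rw [norm_mul]
        exact mul_le_mul (hC _) (hGb _) (norm_nonneg _) ((norm_nonneg _).trans (hC x)))
  have hI4 : ∫ x, G x * G x ∂ν = 0 := by
    have h1 : (fun x => G x * G x) = fun x => f x * G x + f (R x) * G x := by
      funext x; rw [← add_mul]
    rw [h1, integral_add hfG hfRG, hI2, hI3, add_zero]
  have hGG : Integrable (fun x => G x * G x) ν := by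
    have h1 : (fun x => G x * G x) = fun x => f x * G x + f (R x) * G x := by
      funext x; rw [← add_mul]
    rw [h1]; exact hfG.add hfRG
  have hae : ∀ᵐ x ∂ν, G x = 0 := by
    have := (integral_eq_zero_iff_of_nonneg (fun x => mul_self_nonneg (G x)) hGG).1 hI4
    filter_upwards [this] with x hx
    exact mul_self_eq_zero.1 hx
  have := nuS_ae_zero G hGc hae x hx
  simp only [hG] at this
  linarith
end General3

/-- Kernel of the parallel slice transform: for `f` continuous on `S^n`,
the integrals of `f` over all sections of `S^n` by `k`-planes parallel to `a` and meeting
the open unit ball vanish iff `f ∘ R_a = −f` on `S^n`. -/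
theorem statement1 (n k : ℕ) (hn : 2 ≤ n) (hk : 1 < k) (hkn : k ≤ n)
    (a : Euc (n + 1)) (ha : a ≠ 0)
    (f : Euc (n + 1) → ℝ)
    (hf : ContinuousOn f (sphere (0 : Euc (n + 1)) 1)) :
    (∀ ζ : AffineSubspace ℝ (Euc (n + 1)),
        Module.finrank ℝ ζ.direction = k → a ∈ ζ.direction →
        (∃ z ∈ ζ, ‖z‖ < 1) →
        (∫ x in sphere (0 : Euc (n + 1)) 1 ∩ (ζ : Set (Euc (n + 1))),
          f x ∂μH[(k : ℝ) - 1]) = 0) ↔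
      ∀ x ∈ sphere (0 : Euc (n + 1)) 1, f (reflMap a x) = -f x := by
  have hrefl : ∀ x, reflMap a x = (ℝ ∙ a)ᗮ.reflection x := by
    intro x
    rw [Submodule.reflection_orthogonal_apply, Submodule.reflection_singleton_apply, reflMap,
      neg_sub, real_inner_comm, two_smul, ← add_smul]
    congr 2
    simp only [RCLike.ofReal_real_eq_id, id_eq]
    ring
  constructor
  · intro H
    have hnt : Nontrivial (Euc (n + 1)) :=
      Module.nontrivial_of_finrank_pos (R := ℝ) (by simp)
    obtain ⟨g, hg⟩ := ContinuousMap.exists_restrict_eq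
      (isClosed_sphere (x := (0 : Euc (n + 1))) (ε := 1)) ⟨_, hf.domRestrict⟩
    have hgf : ∀ x ∈ sphere (0 : Euc (n + 1)) 1, g x = f x := fun x hx =>
      DFunLike.congr_fun hg ⟨x, hx⟩
    obtain ⟨C, hC⟩ := (isCompact_sphere (0 : Euc (n + 1)) 1).exists_bound_of_continuousOn
      g.continuous.continuousOn
    set F : Euc (n + 1) → ℝ := fun x => max (-|C|) (min |C| (g x)) with hF
    have hFc : Continuous F := by rw [hF]; fun_prop
    have hFf : ∀ x ∈ sphere (0 : Euc (n + 1)) 1, F x = f x := by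
      intro x hx
      have h1 := abs_le.1 ((hC x hx).trans (le_abs_self C))
      simp only [hF]
      rw [min_eq_right h1.2, max_eq_right h1.1, hgf x hx]
    have hFC : ∀ x, ‖F x‖ ≤ |C| := fun x => by
      rw [Real.norm_eq_abs, abs_le]
      exact ⟨le_max_left _ _, max_le (by linarith [abs_nonneg C]) (min_le_left _ _)⟩
    have HF : ∀ ζ : AffineSubspace ℝ (Euc (n + 1)),
        Module.finrank ℝ ζ.direction = k → a ∈ ζ.direction →
        (∃ z ∈ ζ, ‖z‖ < 1) →
        (∫ x in sphere (0 : Euc (n + 1)) 1 ∩ (ζ : Set (Euc (n + 1))),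
          F x ∂μH[(k : ℝ) - 1]) = 0 := by
      intro ζ h1 h2 h3
      rw [← H ζ h1 h2 h3]
      refine setIntegral_congr_fun ?_ fun x hx => hFf x hx.1
      exact (isClosed_sphere.inter (AffineSubspace.closed_of_finiteDimensional ζ)).measurableSet
    intro x hx
    have hx1 : ‖x‖ = 1 := by simpa using hx
    have := refl_of_fourier a ha F hFc |C| hFC
      (slice_fourier_zero k hk (by simp; omega) a F hFc |C| hFC HF) x hx1
    rw [hrefl, ← hFf x hx, ← this, hFf]
    simp [hx1]
  · intro H ζ h1 h2 h3
    set R := (ℝ ∙ a)ᗮ.reflection with hR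
    have hm : MeasurableSet (sphere (0 : Euc (n + 1)) 1 ∩ (ζ : Set (Euc (n + 1)))) :=
      (isClosed_sphere.inter (AffineSubspace.closed_of_finiteDimensional ζ)).measurableSet
    have hζ : ∀ x ∈ ζ, R x ∈ ζ := by
      intro x hx
      rw [← hrefl, reflMap, sub_eq_add_neg, add_comm x, ← neg_smul]
      exact AffineSubspace.vadd_mem_of_mem_direction (ζ.direction.smul_mem _ h2) hx
    have hpre : R ⁻¹' (sphere (0 : Euc (n + 1)) 1 ∩ (ζ : Set (Euc (n + 1)))) =
        sphere (0 : Euc (n + 1)) 1 ∩ (ζ : Set (Euc (n + 1))) := by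
      ext x
      simp only [Set.mem_preimage, Set.mem_inter_iff, mem_sphere_zero_iff_norm, R.norm_map,
        SetLike.mem_coe]
      refine and_congr_right fun _ => ⟨fun h => ?_, hζ x⟩
      have := hζ _ h
      rwa [hR, Submodule.reflection_reflection] at this
    have hmp := hm_inv ((k : ℝ) - 1) R _ hpre hm
    have h4 := hmp.integral_comp R.toHomeomorph.measurableEmbedding f
    have h5 : ∫ x in sphere (0 : Euc (n + 1)) 1 ∩ (ζ : Set (Euc (n + 1))),
          f (R x) ∂μH[(k : ℝ) - 1] = ∫ x in sphere (0 : Euc (n + 1)) 1 ∩ (ζ : Set (Euc (n + 1))),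
          - f x ∂μH[(k : ℝ) - 1] := by
      refine setIntegral_congr_fun hm fun x hx => ?_
      rw [← H x hx.1, hrefl]
    rw [integral_neg] at h5
    have h6 := h5.symm.trans h4
    linarith
end

section
/- Let n ≥ 2, 1 < k ≤ n, and let a ∈ ℝ^{n+1} \ {0}. Suppose f and g are continuous functions on S^n satisfying f(R_a x) = f(x) and g(R_a x) = g(x) for all x ∈ S^n, and suppose ∫_{S^n ∩ ζ} f dH^{k−1} = ∫_{S^n ∩ ζ} g dH^{k−1} for every k-dimensional affine plane ζ parallel to the vector a and meeting the open unit ball B^{n+1}. Then f = g on S^n. -/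
open MeasureTheory Metric Matrix
open scoped InnerProductSpace ENNReal

lemma kernel_zero {X : Type*} [MetricSpace X] [CompactSpace X] [SecondCountableTopology X]
    [MeasurableSpace X] [BorelSpace X] (μ ν : Measure X) [IsFiniteMeasure μ] [IsFiniteMeasure ν]
    (hμ0 : μ ≠ 0) (hμ : ∀ x y r, μ (ball x r) = μ (ball y r))
    (hν : ∀ x y r, ν (ball x r) = ν (ball y r))
    (F : X → ℂ) (hF : Continuous F) (h : ∫ x, F x ∂μ = 0) : ∫ x, F x ∂ν = 0 := by
  rcases isEmpty_or_nonempty X with hX | ⟨⟨x0⟩⟩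
  · simp [Measure.eq_zero_of_isEmpty ν]
  obtain ⟨C, hC⟩ : ∃ C, ∀ x, ‖F x‖ ≤ C := by
    obtain ⟨C, hC⟩ := isCompact_univ.exists_bound_of_continuousOn hF.continuousOn
    exact ⟨C, fun x => hC x trivial⟩
  have hFμ : Integrable F μ := Integrable.of_bound hF.aestronglyMeasurable C (.of_forall hC)
  have hFν : Integrable F ν := Integrable.of_bound hF.aestronglyMeasurable C (.of_forall hC)
  have key : ∀ ε > 0, ‖∫ x, F x ∂ν‖ ≤ ε * ν.real Set.univ := by
    intro ε hε
    obtain ⟨δ, hδ, hd⟩ := Metric.uniformContinuous_iff.1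
      (CompactSpace.uniformContinuous_of_continuous hF) ε hε
    set c := μ.real (ball x0 δ) with hc
    have hcx : ∀ x, μ.real (ball x δ) = c := fun x => by
      simp only [hc, measureReal_def, hμ x x0 δ]
    have hcν : ∀ x, ν.real (ball x δ) = ν.real (ball x0 δ) := fun x => by
      simp only [measureReal_def, hν x x0 δ]
    have hcpos : 0 < c := by
      rcases (measureReal_nonneg : 0 ≤ c).lt_or_eq with h1 | h1
      · exact h1
      exfalso
      apply hμ0
      rw [← Measure.measure_univ_eq_zero]
      apply measure_null_of_locally_null
      intro x _
      refine ⟨ball x δ, by simpa using ball_mem_nhds x hδ, ?_⟩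
      have := (hcx x).trans h1.symm
      exact (measureReal_eq_zero_iff).1 this
    let A : Set (X × X) := {p | dist p.1 p.2 < δ}
    have hA : MeasurableSet A := (isOpen_lt (by fun_prop) (by fun_prop)).measurableSet
    let K : X → X → ℂ := fun x y => A.indicator (fun p => F p.1) (x, y)
    have hK : Integrable (Function.uncurry K) (μ.prod ν) := by
      have : Integrable (fun p : X × X => F p.1) (μ.prod ν) :=
        Integrable.of_bound (by fun_prop) C (.of_forall fun p => hC p.1)
      exact this.indicator hA
    have h1 : ∀ x, ∫ y, K x y ∂ν = F x * (ν.real (ball x0 δ) : ℂ) := by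
      intro x
      have : (fun y => K x y) = (ball x δ).indicator (fun _ => F x) := by
        ext y
        simp only [K, A, Set.indicator, Set.mem_ofPred_eq, mem_ball, dist_comm]
      rw [this, integral_indicator measurableSet_ball, setIntegral_const, hcν]
      simp [mul_comm]
    have h2 : ∀ y, ‖F y * (c : ℂ) - ∫ x, K x y ∂μ‖ ≤ ε * c := by
      intro y
      have : (fun x => K x y) = (ball y δ).indicator F := by
        ext x
        simp only [K, A, Set.indicator, Set.mem_ofPred_eq, mem_ball]
      rw [this, integral_indicator measurableSet_ball]
      have h3 : F y * (c : ℂ) = ∫ x in ball y δ, F y ∂μ := by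
        rw [setIntegral_const, hcx]; simp [mul_comm]
      rw [h3, ← integral_sub (integrable_const _) hFμ.integrableOn, ← hcx y]
      refine norm_setIntegral_le_of_norm_le_const (measure_lt_top _ _) ?_
      intro x hx
      have := hd (mem_ball'.1 hx)
      rw [dist_eq_norm] at this
      exact this.le
    have h3 : ∫ y, ∫ x, K x y ∂μ ∂ν = 0 := by
      rw [← integral_integral_swap hK]
      simp_rw [h1]
      rw [integral_mul_const, h, zero_mul]
    have h4 : ‖∫ y, (F y * (c : ℂ) - ∫ x, K x y ∂μ) ∂ν‖ ≤ (ε * c) * ν.real Set.univ :=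
      norm_integral_le_of_norm_le_const (.of_forall h2)
    have h5 : Integrable (fun y => ∫ x, K x y ∂μ) ν := hK.integral_prod_right
    rw [integral_sub (hFν.mul_const _) h5, h3, sub_zero, integral_mul_const,
      norm_mul, Complex.norm_real, Real.norm_of_nonneg hcpos.le] at h4
    have : ‖∫ x, F x ∂ν‖ * c ≤ (ε * ν.real Set.univ) * c := by linarith
    exact le_of_mul_le_mul_right this hcpos
  rw [← norm_le_zero_iff]
  have hN : 0 ≤ ν.real Set.univ := measureReal_nonneg
  refine le_of_forall_pos_le_add fun η hη => ?_
  have := key (η / (ν.real Set.univ + 1)) (by positivity)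
  refine this.trans ?_
  rw [zero_add, div_mul_eq_mul_div, div_le_iff₀ (by positivity)]
  nlinarith

section sph
variable {W : Type*} [NormedAddCommGroup W] [InnerProductSpace ℝ W] [FiniteDimensional ℝ W]
  [MeasurableSpace W] [BorelSpace W]


lemma radial_lip (x y : W) (hx : 1 ≤ ‖x‖) (hy : 1 ≤ ‖y‖) :
    ‖‖x‖⁻¹ • x - ‖y‖⁻¹ • y‖ ≤ 2 * ‖x - y‖ := by
  have hx0 : 0 < ‖x‖ := by linarith
  have hy0 : 0 < ‖y‖ := by linarith
  have e : ‖x‖⁻¹ • x - ‖y‖⁻¹ • y = ‖x‖⁻¹ • (x - y) + (‖x‖⁻¹ * ((‖y‖ - ‖x‖) * ‖y‖⁻¹)) • y := by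
    have : ‖x‖⁻¹ * ((‖y‖ - ‖x‖) * ‖y‖⁻¹) = ‖x‖⁻¹ - ‖y‖⁻¹ := by field_simp
    rw [this]; module
  have i1 : ‖x‖⁻¹ ≤ 1 := inv_le_one_of_one_le₀ hx
  have i0 : 0 ≤ ‖x‖⁻¹ := by positivity
  rw [e]
  refine (norm_add_le _ _).trans ?_
  rw [norm_smul, norm_smul, norm_mul, norm_mul, norm_inv, norm_inv, norm_norm, norm_norm]
  have h3 : ‖x‖⁻¹ * (‖‖y‖ - ‖x‖‖ * ‖y‖⁻¹) * ‖y‖ = ‖x‖⁻¹ * ‖‖y‖ - ‖x‖‖ := by field_simp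
  rw [h3]
  have h4 : ‖‖y‖ - ‖x‖‖ ≤ ‖x - y‖ := by
    rw [norm_sub_rev x y]; exact abs_norm_sub_norm_le y x
  have h5 : 0 ≤ ‖x - y‖ := norm_nonneg _
  have h6 : 0 ≤ ‖‖y‖ - ‖x‖‖ := norm_nonneg _
  nlinarith

lemma cap_finite (k : ℕ) (hk : 1 < k) (hW : Module.finrank ℝ W = k) (e : W) (he : ‖e‖ = 1) :
    μH[(k : ℝ) - 1] (ball e 1 ∩ sphere (0 : W) 1) < ∞ := by
  have : Fact (Module.finrank ℝ W = (k - 1) + 1) := ⟨by omega⟩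
  have he0 : e ≠ 0 := by intro h; simp [h] at he
  have hK : Module.finrank ℝ (ℝ ∙ e)ᗮ = k - 1 := Submodule.finrank_orthogonal_span_singleton he0
  have hd : ((k : ℝ) - 1) = ((k - 1 : ℕ) : ℝ) := by push_cast [Nat.cast_sub hk.le]; ring
  have horth : ∀ u : (ℝ ∙ e)ᗮ, ⟪e, (u : W)⟫_ℝ = 0 := fun u =>
    Submodule.mem_orthogonal_singleton_iff_inner_right.1 u.2
  have hnorm : ∀ u : (ℝ ∙ e)ᗮ, 1 ≤ ‖e + (u : W)‖ := by
    intro u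
    have h1 : ‖e + (u : W)‖ ^ 2 = 1 + ‖(u : W)‖ ^ 2 := by
      rw [norm_add_sq_real, horth, he]; ring
    by_contra! hlt
    have : ‖e + (u : W)‖ ^ 2 < 1 := by
      have := norm_nonneg (e + (u : W)); nlinarith
    nlinarith [sq_nonneg ‖(u : W)‖]
  let ψ : (ℝ ∙ e)ᗮ → W := fun u => ‖e + (u : W)‖⁻¹ • (e + (u : W))
  have hψ : LipschitzWith 2 ψ := by
    apply LipschitzWith.of_dist_le_mul
    intro u v
    rw [dist_eq_norm, dist_eq_norm]
    refine (radial_lip _ _ (hnorm u) (hnorm v)).trans ?_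
    simp
  have hsub : ball e 1 ∩ sphere (0 : W) 1 ⊆ ψ '' closedBall 0 3 := by
    rintro x ⟨hx1, hx2⟩
    have hx2 : ‖x‖ = 1 := by simpa using hx2
    have hx1 : ‖x - e‖ < 1 := by simpa [dist_eq_norm] using hx1
    have hin : 1 / 2 < ⟪e, x⟫_ℝ := by
      have : ‖x - e‖ ^ 2 < 1 := by have := norm_nonneg (x - e); nlinarith
      rw [norm_sub_sq_real, hx2, he, real_inner_comm] at this
      linarith
    set t := ⟪e, x⟫_ℝ with ht
    have ht0 : 0 < t := by linarith
    have hmem : t⁻¹ • x - e ∈ (ℝ ∙ e)ᗮ := by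
      rw [Submodule.mem_orthogonal_singleton_iff_inner_right, inner_sub_right, inner_smul_right,
        ← ht, real_inner_self_eq_norm_sq, he]
      field_simp; norm_num
    have hti : t⁻¹ ≤ 2 := by
      rw [inv_le_comm₀ ht0 (by norm_num)]; linarith
    refine ⟨⟨_, hmem⟩, ?_, ?_⟩
    · rw [mem_closedBall_zero_iff]
      change ‖t⁻¹ • x - e‖ ≤ 3
      refine (norm_sub_le _ _).trans ?_
      rw [norm_smul, hx2, he, norm_inv, Real.norm_of_nonneg ht0.le]; linarith
    · simp only [ψ]
      rw [add_sub_cancel, norm_smul, hx2, norm_inv, Real.norm_of_nonneg ht0.le, smul_smul]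
      simp [ht0.ne']
  rw [hd]
  refine (measure_mono hsub).trans_lt ?_
  refine (hψ.hausdorffMeasure_image_le (by positivity) _).trans_lt ?_
  refine ENNReal.mul_lt_top (by simp) ?_
  rw [← hK]
  exact (isCompact_closedBall _ _).measure_lt_top

lemma sphere_finite (k : ℕ) (hk : 1 < k) (hW : Module.finrank ℝ W = k) :
    μH[(k : ℝ) - 1] (sphere (0 : W) 1) < ∞ := by
  apply (isCompact_sphere _ _).measure_lt_top_of_nhdsWithin
  intro x hx
  refine ⟨ball x 1 ∩ sphere 0 1, ?_, cap_finite k hk hW x (by simpa using hx)⟩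
  rw [Set.inter_comm]
  exact inter_mem_nhdsWithin _ (ball_mem_nhds _ one_pos)

lemma sphere_pos (k : ℕ) (hk : 1 < k) (hW : Module.finrank ℝ W = k) :
    0 < μH[(k : ℝ) - 1] (sphere (0 : W) 1) := by
  have : Fact (Module.finrank ℝ W = (k - 1) + 1) := ⟨by omega⟩
  have : Nontrivial W := Module.nontrivial_of_finrank_pos (R := ℝ) (by omega)
  obtain ⟨e, he⟩ := exists_norm_eq W (zero_le_one)
  have he0 : e ≠ 0 := by intro h; simp [h] at he
  have hK : Module.finrank ℝ (ℝ ∙ e)ᗮ = k - 1 := Submodule.finrank_orthogonal_span_singleton he0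
  have hd : ((k : ℝ) - 1) = ((k - 1 : ℕ) : ℝ) := by push_cast [Nat.cast_sub hk.le]; ring
  rw [hd]
  refine lt_of_lt_of_le ?_ (hausdorffMeasure_orthogonalProjectionOnto_le (ℝ ∙ e)ᗮ _ _
    (by positivity))
  have : ball (0 : (ℝ ∙ e)ᗮ) 1 ⊆ (ℝ ∙ e)ᗮ.orthogonalProjectionOnto '' (sphere (0 : W) 1) := by
    intro u hu
    have hu : ‖(u : W)‖ < 1 := by simpa using hu
    have horth : ⟪(u : W), e⟫_ℝ = 0 :=
      Submodule.mem_orthogonal_singleton_iff_inner_left.1 u.2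
    refine ⟨u + Real.sqrt (1 - ‖(u : W)‖ ^ 2) • e, ?_, ?_⟩
    · rw [mem_sphere_zero_iff_norm, ← sq_eq_sq₀ (norm_nonneg _) zero_le_one, norm_add_sq_real,
        inner_smul_right, horth, norm_smul, he, mul_one, Real.norm_of_nonneg (Real.sqrt_nonneg _),
        Real.sq_sqrt (by nlinarith [norm_nonneg (u : W)])]
      ring
    · rw [map_add, Submodule.orthogonalProjectionOnto_mem_subspace_eq_self, map_smul,
        Submodule.orthogonalProjectionOnto_orthogonalComplement_singleton_eq_zero]
      simp
  refine lt_of_lt_of_le ?_ (measure_mono this)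
  rw [← hK]
  exact measure_ball_pos _ _ one_pos

end sph
section sph2
variable {W : Type*} [NormedAddCommGroup W] [InnerProductSpace ℝ W] [FiniteDimensional ℝ W]
  [MeasurableSpace W] [BorelSpace W]

lemma sphX_finite (k : ℕ) (hk : 1 < k) (hW : Module.finrank ℝ W = k) :
    IsFiniteMeasure (μH[(k : ℝ) - 1] : Measure (sphere (0 : W) 1)) := by
  constructor
  have h0 : (0 : ℝ) ≤ (k : ℝ) - 1 := by
    have : (1 : ℝ) < k := by exact_mod_cast hk
    linarith
  rw [← isometry_subtype_coe.hausdorffMeasure_image (Or.inl h0)]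
  rw [Set.image_univ, Subtype.range_coe]
  exact sphere_finite k hk hW

lemma sphX_ne_zero (k : ℕ) (hk : 1 < k) (hW : Module.finrank ℝ W = k) :
    (μH[(k : ℝ) - 1] : Measure (sphere (0 : W) 1)) ≠ 0 := by
  have h0 : (0 : ℝ) ≤ (k : ℝ) - 1 := by
    have : (1 : ℝ) < k := by exact_mod_cast hk
    linarith
  rw [← Measure.measure_univ_ne_zero]
  rw [← isometry_subtype_coe.hausdorffMeasure_image (Or.inl h0)]
  rw [Set.image_univ, Subtype.range_coe]
  exact (sphere_pos k hk hW).ne'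

lemma exists_rot_s2 (x y : sphere (0 : W) 1) (r : ℝ) : ∃ ρ : W ≃ₗᵢ[ℝ] W,
    ρ '' ((↑) '' (ball x r)) = (↑) '' (ball y r) := by
  have hx : ‖(x : W)‖ = 1 := by simp
  have hy : ‖(y : W)‖ = 1 := by simp
  refine ⟨(ℝ ∙ ((x : W) - y))ᗮ.reflection, ?_⟩
  have hxy := Submodule.reflection_sub (hx.trans hy.symm)
  set ρ := (ℝ ∙ ((x : W) - y))ᗮ.reflection
  have h2 : ∀ z : sphere (0 : W) 1, ((↑) '' (ball z r) : Set W) = ball (z : W) r ∩ sphere 0 1 := by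
    intro z
    ext w
    simp only [Set.mem_image, mem_ball, Subtype.exists, Set.mem_inter_iff]
    constructor
    · rintro ⟨w, hw, h, rfl⟩
      exact ⟨h, hw⟩
    · rintro ⟨h, hw⟩
      exact ⟨w, hw, h, rfl⟩
  rw [h2, h2, Set.image_inter ρ.injective]
  rw [ρ.image_ball, ρ.image_sphere, hxy, map_zero]

lemma inv_hausdorff (d : ℝ) (hd : 0 ≤ d) (x y : sphere (0 : W) 1) (r : ℝ) :
    μH[d] (ball x r) = μH[d] (ball y r) := by
  obtain ⟨ρ, hρ⟩ := exists_rot_s2 x y r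
  rw [← isometry_subtype_coe.hausdorffMeasure_image (Or.inl hd),
    ← isometry_subtype_coe.hausdorffMeasure_image (Or.inl hd) (ball y r), ← hρ,
    ρ.isometry.hausdorffMeasure_image (Or.inl hd)]

open scoped Pointwise in
lemma inv_toSphere (x y : sphere (0 : W) 1) (r : ℝ) :
    (volume : Measure W).toSphere (ball x r) = (volume : Measure W).toSphere (ball y r) := by
  obtain ⟨ρ, hρ⟩ := exists_rot_s2 x y r
  rw [Measure.toSphere_apply' _ measurableSet_ball, Measure.toSphere_apply' _ measurableSet_ball,
    ← hρ]
  congr 1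
  have : Set.Ioo (0 : ℝ) 1 • (ρ '' ((↑) '' (ball x r)) : Set W)
      = ρ '' (Set.Ioo (0 : ℝ) 1 • ((↑) '' (ball x r))) := by
    rw [← Set.image2_smul, ← Set.image2_smul, Set.image2_image_right, Set.image_image2]
    simp
  rw [this, ← ρ.measurePreserving.measure_preimage_emb ρ.toHomeomorph.measurableEmbedding (ρ '' _),
    Set.preimage_image_eq _ ρ.injective]

lemma polar_zero (k : ℕ) (hk : 1 < k) (hW : Module.finrank ℝ W = k) (F : W → ℂ)
    (hFi : Integrable F)
    (hFc : ∀ r : ℝ, 0 < r → Continuous (fun θ : sphere (0 : W) 1 => F (r • (θ : W))))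
    (hF : ∀ r : ℝ, 0 < r → ∫ θ : sphere (0 : W) 1, F (r • (θ : W)) ∂μH[(k : ℝ) - 1] = 0) :
    ∫ x, F x = 0 := by
  have h0 : (0 : ℝ) ≤ (k : ℝ) - 1 := by
    have : (1 : ℝ) < k := by exact_mod_cast hk
    linarith
  have : Nontrivial W := Module.nontrivial_of_finrank_pos (R := ℝ) (by omega)
  have hz : ∀ r : ℝ, 0 < r →
      ∫ θ : sphere (0 : W) 1, F (r • (θ : W)) ∂(volume : Measure W).toSphere = 0 := by
    intro r hr
    have := sphX_finite k hk hW
    exact kernel_zero μH[(k : ℝ) - 1] _ (sphX_ne_zero k hk hW) (inv_hausdorff _ h0)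
      inv_toSphere _ (hFc r hr) (hF r hr)
  have mp := (volume : Measure W).measurePreserving_homeomorphUnitSphereProd
  have me := (homeomorphUnitSphereProd W).measurableEmbedding
  let G : sphere (0 : W) 1 × Set.Ioi (0 : ℝ) → ℂ := fun p => F (p.2.1 • (p.1 : W))
  have hG : ∀ x : ({0}ᶜ : Set W), G (homeomorphUnitSphereProd W x) = F x := by
    intro x
    have hx : ‖(x : W)‖ ≠ 0 := norm_ne_zero_iff.2 x.2
    simp only [G, homeomorphUnitSphereProd_apply_snd_coe, homeomorphUnitSphereProd_apply_fst_coe]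
    rw [smul_smul, mul_inv_cancel₀ hx, one_smul]
  have e1 : ∫ x, F x = ∫ x : ({0}ᶜ : Set W), F x ∂((volume : Measure W).comap (↑)) := by
    rw [integral_subtype_comap (measurableSet_singleton _).compl F,
        restrict_compl_singleton]
  have hGi : Integrable G ((volume : Measure W).toSphere.prod
      (.volumeIoiPow (Module.finrank ℝ W - 1))) := by
    rw [← mp.integrable_comp_emb me]
    have : G ∘ (homeomorphUnitSphereProd W) = F ∘ (↑) := by
      ext x; exact hG x
    rw [this, ← integrableOn_iff_comap_subtypeVal (measurableSet_singleton _).compl]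
    exact hFi.integrableOn
  rw [e1]
  simp_rw [← hG]
  rw [mp.integral_comp me, integral_prod_symm _ hGi]
  refine integral_eq_zero_of_ae (.of_forall fun r => ?_)
  exact hz r.1 r.2

end sph2
section slice
variable {E : Type*} [NormedAddCommGroup E] [InnerProductSpace ℝ E] [FiniteDimensional ℝ E]
  [MeasurableSpace E] [BorelSpace E]

lemma slice_transfer (k : ℕ) (hk : 1 < k) (V : Submodule ℝ E) (v : E) (hv : v ∈ Vᗮ) (s : ℝ)
    (hs : 0 < s) (hsv : s ^ 2 + ‖v‖ ^ 2 = 1) (H : E → ℂ) (hH : Continuous H)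
    (hz : ∫ x in sphere (0 : E) 1 ∩ (AffineSubspace.mk' v V : Set E), H x ∂μH[(k : ℝ) - 1] = 0) :
    ∫ θ : sphere (0 : V) 1, H (v + s • (θ : E)) ∂μH[(k : ℝ) - 1] = 0 := by
  have h0 : (0 : ℝ) ≤ (k : ℝ) - 1 := by
    have : (1 : ℝ) < k := by exact_mod_cast hk
    linarith
  let ι : sphere (0 : V) 1 → E := fun θ => s⁻¹ • v + (θ : E)
  have hι : Isometry ι := by
    apply Isometry.of_dist_eq
    intro x y
    simp only [ι, dist_add_left]
    rfl
  let f : E → E := AffineMap.homothety (0 : E) s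
  have hfa : ∀ x, f x = s • x := by intro x; simp [f, AffineMap.homothety_apply]
  have hfun : f = fun x => s • x := funext hfa
  have hfe : MeasurableEmbedding f := by
    rw [hfun]
    exact measurableEmbedding_const_smul₀ hs.ne'
  have hmapf : Measure.map f μH[(k : ℝ) - 1] = _ := map_homothety_hausdorffMeasure h0 0 hs.ne'
  have hmapι := hι.map_hausdorffMeasure (d := (k : ℝ) - 1) (Or.inl h0)
  have hpre : f ⁻¹' (sphere (0 : E) 1 ∩ (AffineSubspace.mk' v V : Set E)) = Set.range ι := by
    ext x
    simp only [Set.mem_preimage, Set.mem_inter_iff, hfa, mem_sphere_zero_iff_norm,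
      SetLike.mem_coe, AffineSubspace.mem_mk', vsub_eq_sub, Set.mem_range, ι]
    constructor
    · rintro ⟨hx1, hx2⟩
      have hm : x - s⁻¹ • v ∈ V := by
        have := V.smul_mem s⁻¹ hx2
        rwa [smul_sub, smul_smul, inv_mul_cancel₀ hs.ne', one_smul] at this
      have hxe : s • x = (s • x - v) + v := by abel
      have hnn : ‖s • x - v‖ ^ 2 = s ^ 2 := by
        have h1 : ‖s • x‖ ^ 2 = ‖s • x - v‖ ^ 2 + ‖v‖ ^ 2 := by
          conv_lhs => rw [hxe]
          rw [norm_add_sq_real, Submodule.inner_right_of_mem_orthogonal hx2 hv]; ring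
        rw [hx1] at h1; linarith
      have hn1 : ‖x - s⁻¹ • v‖ = 1 := by
        have h2 : s • x - v = s • (x - s⁻¹ • v) := by
          rw [smul_sub, smul_smul, mul_inv_cancel₀ hs.ne', one_smul]
        rw [h2, norm_smul, Real.norm_of_nonneg hs.le, mul_pow] at hnn
        have h3 : ‖x - s⁻¹ • v‖ ^ 2 = 1 := by
          have : s ^ 2 ≠ 0 := by positivity
          exact mul_left_cancel₀ this (by rw [hnn, mul_one])
        have := norm_nonneg (x - s⁻¹ • v)
        nlinarith
      exact ⟨⟨⟨_, hm⟩, by simpa using hn1⟩, by simp⟩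
    · rintro ⟨θ, rfl⟩
      have hθ : ‖(θ : E)‖ = 1 := by
        have := θ.2; rw [mem_sphere_zero_iff_norm] at this; exact this
      have e1 : s • (s⁻¹ • v + (θ : E)) = v + s • (θ : E) := by
        rw [smul_add, smul_smul, mul_inv_cancel₀ hs.ne', one_smul]
      rw [e1]
      have hm : s • (θ : E) ∈ V := V.smul_mem _ (θ : V).2
      constructor
      · rw [← sq_eq_sq₀ (norm_nonneg _) zero_le_one, norm_add_sq_real,
          Submodule.inner_left_of_mem_orthogonal hm hv, norm_smul, hθ,
          Real.norm_of_nonneg hs.le]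
        linarith
      · simpa using hm
  have hS : MeasurableSet (sphere (0 : E) 1 ∩ (AffineSubspace.mk' v V : Set E)) :=
    (isClosed_sphere.inter (AffineSubspace.closed_of_finiteDimensional _)).measurableSet
  have hr := hfe.restrict_map μH[(k : ℝ) - 1]
    (sphere (0 : E) 1 ∩ (AffineSubspace.mk' v V : Set E))
  rw [hpre, ← hmapι, hmapf] at hr
  have e2 : ∫ θ : sphere (0 : V) 1, H (v + s • (θ : E)) ∂μH[(k : ℝ) - 1]
      = ∫ x, H x ∂(Measure.map f (Measure.map ι μH[(k : ℝ) - 1])) := by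
    rw [hfe.integral_map, integral_map hι.continuous.measurable.aemeasurable]
    · congr 1
      ext θ
      simp only [hfa, ι]
      rw [smul_add, smul_smul, mul_inv_cancel₀ hs.ne', one_smul]
    · rw [hfun]; exact (hH.comp (by fun_prop)).aestronglyMeasurable
  rw [e2, ← hr, Measure.restrict_smul, integral_smul_nnreal_measure, hz, smul_zero]

end slice
section vanish
variable {E : Type*} [NormedAddCommGroup E] [InnerProductSpace ℝ E] [FiniteDimensional ℝ E]
  [MeasurableSpace E] [BorelSpace E]

lemma vanish (k : ℕ) (hk : 1 < k) (V : Submodule ℝ E) (hV : Module.finrank ℝ V = k)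
    (ξ : E) (hξ : ∀ x ∈ V, ⟪x, ξ⟫_ℝ = 0) (h : E → ℝ) (hc : Continuous h)
    (hsl : ∀ v ∈ Vᗮ, ‖v‖ < 1 →
      ∫ x in sphere (0 : E) 1 ∩ (AffineSubspace.mk' v V : Set E), h x ∂μH[(k : ℝ) - 1] = 0) :
    ∫ x in ball (0 : E) 1, (h (‖x‖⁻¹ • x) : ℂ) * Complex.exp (⟪‖x‖⁻¹ • x, ξ⟫_ℝ * Complex.I) = 0 := by
  obtain ⟨C, hC⟩ := (isCompact_closedBall (0 : E) 1).exists_bound_of_continuousOn hc.continuousOn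
  have hN : ∀ x : E, ‖x‖⁻¹ • x ∈ closedBall (0 : E) 1 := by
    intro x
    rw [mem_closedBall_zero_iff, norm_smul, norm_inv, norm_norm]
    exact inv_mul_le_one
  have hNm : Measurable (fun x : E => ‖x‖⁻¹ • x) := by fun_prop
  let Φ : E → ℂ := (ball (0 : E) 1).indicator fun x =>
    (h (‖x‖⁻¹ • x) : ℂ) * Complex.exp (⟪‖x‖⁻¹ • x, ξ⟫_ℝ * Complex.I)
  have hmeas : Measurable fun x : E =>
    (h (‖x‖⁻¹ • x) : ℂ) * Complex.exp (⟪‖x‖⁻¹ • x, ξ⟫_ℝ * Complex.I) := by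
    have : Continuous fun y : E => (h y : ℂ) * Complex.exp (⟪y, ξ⟫_ℝ * Complex.I) := by fun_prop
    exact this.measurable.comp hNm
  have hΦ : Integrable Φ := by
    rw [integrable_indicator_iff measurableSet_ball]
    have : IsFiniteMeasure ((volume : Measure E).restrict (ball 0 1)) :=
      ⟨by simpa using measure_ball_lt_top⟩
    refine Integrable.of_bound hmeas.aestronglyMeasurable C (.of_forall fun x => ?_)
    rw [norm_mul, Complex.norm_exp_ofReal_mul_I, mul_one, Complex.norm_real]
    exact hC _ (hN x)
  rw [← integral_indicator measurableSet_ball]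
  change ∫ x, Φ x = 0
  let e : E ≃ᵐ V × Vᗮ := V.orthogonalDecomposition.toHomeomorph.toMeasurableEquiv.trans
    (MeasurableEquiv.toLp 2 _).symm
  have he : MeasurePreserving e volume volume :=
    V.orthogonalDecomposition.measurePreserving.trans (WithLp.volume_preserving_ofLp _ _)
  have hes : ∀ q : V × Vᗮ, e.symm q = q.1.val + q.2.val := by
    intro q; simp [e]
  have hi : Integrable (fun q : V × Vᗮ => Φ (q.1.val + q.2.val)) (volume.prod volume) := by
    have := (he.symm.integrable_comp_emb e.symm.measurableEmbedding).2 hΦ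
    simp only [Function.comp_def, hes] at this
    exact this
  have e1 : ∫ x, Φ x = ∫ q : V × Vᗮ, Φ (q.1.val + q.2.val) ∂(volume.prod volume) := by
    rw [← he.symm.integral_comp e.symm.measurableEmbedding]
    simp only [hes]; rfl
  rw [e1, integral_prod_symm _ hi]
  apply integral_eq_zero_of_ae
  filter_upwards [hi.prod_left_ae] with v hv
  have hform : ∀ r : ℝ, 0 < r → ∃ (s : ℝ) (w : E) (c : ℂ), 0 < s ∧ s ^ 2 + ‖w‖ ^ 2 = 1 ∧ w ∈ Vᗮ ∧
      ∀ θ : sphere (0 : V) 1, Φ ((r • (θ : V) : V).val + v.val) = c * (h (w + s • (θ : E)) : ℂ) := by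
    intro r hr
    set R := Real.sqrt (r ^ 2 + ‖v.val‖ ^ 2) with hR
    have hpos : 0 < r ^ 2 + ‖v.val‖ ^ 2 := by positivity
    have hR0 : 0 < R := Real.sqrt_pos.2 hpos
    have hR2 : R ^ 2 = r ^ 2 + ‖v.val‖ ^ 2 := Real.sq_sqrt hpos.le
    refine ⟨r / R, R⁻¹ • v.val, if R < 1 then Complex.exp ((R⁻¹ * ⟪v.val, ξ⟫_ℝ : ℝ) * Complex.I) else 0,
      by positivity, ?_, Submodule.smul_mem _ _ v.2, ?_⟩
    · rw [norm_smul, norm_inv, Real.norm_of_nonneg hR0.le]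
      field_simp
      linarith
    · intro θ
      have hθ : ‖(θ : E)‖ = 1 := by
        have := θ.2; rw [mem_sphere_zero_iff_norm] at this; exact this
      have hm : r • (θ : E) ∈ V := V.smul_mem _ (θ : V).2
      have hx : ((r • (θ : V) : V).val + v.val) = r • (θ : E) + v.val := rfl
      have hn : ‖r • (θ : E) + v.val‖ = R := by
        rw [← sq_eq_sq₀ (norm_nonneg _) hR0.le, hR2, norm_add_sq_real,
          Submodule.inner_right_of_mem_orthogonal hm v.2, norm_smul, hθ,
          Real.norm_of_nonneg hr.le]
        ring
      have hy : R⁻¹ • (r • (θ : E) + v.val) = R⁻¹ • v.val + (r / R) • (θ : E) := by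
        rw [smul_add, smul_smul, add_comm, div_eq_inv_mul]
      have hin : ⟪R⁻¹ • v.val + (r / R) • (θ : E), ξ⟫_ℝ = R⁻¹ * ⟪v.val, ξ⟫_ℝ := by
        rw [inner_add_left, real_inner_smul_left, real_inner_smul_left, hξ _ (θ : V).2]; ring
      simp only [Φ, Set.indicator, mem_ball_zero_iff, hx, hn, hy, hin]
      split_ifs
      · ring
      · simp
  change ∫ x : V, Φ (x.val + v.val) = 0
  apply polar_zero k hk hV _ hv
  · intro r hr
    obtain ⟨s, w, c, hs, hsw, hw, hh⟩ := hform r hr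
    simp_rw [hh]
    fun_prop
  · intro r hr
    obtain ⟨s, w, c, hs, hsw, hw, hh⟩ := hform r hr
    simp_rw [hh]
    rw [integral_const_mul, slice_transfer k hk V w hw s hs hsw (fun x => (h x : ℂ)) (by fun_prop),
      mul_zero]
    rw [integral_complex_ofReal, hsl w hw (by nlinarith [norm_nonneg w])]
    simp

lemma exists_submodule_between (k : ℕ) (A B : Submodule ℝ E) (hAB : A ≤ B) (hA : Module.finrank ℝ A ≤ k)
    (hB : k ≤ Module.finrank ℝ B) : ∃ V : Submodule ℝ E, A ≤ V ∧ V ≤ B ∧ Module.finrank ℝ V = k := by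
  induction k, hA using Nat.le_induction with
  | base => exact ⟨A, le_rfl, hAB, rfl⟩
  | succ m hm ih =>
    obtain ⟨V, h1, h2, h3⟩ := ih (by omega)
    have hlt : V < B := lt_of_le_of_ne h2 (by rintro rfl; omega)
    obtain ⟨x, hxB, hxV⟩ := SetLike.exists_of_lt hlt
    refine ⟨V ⊔ ℝ ∙ x, h1.trans le_sup_left, sup_le h2 (by simpa using hxB), ?_⟩
    have hx0 : x ≠ 0 := by rintro rfl; exact hxV V.zero_mem
    have := Submodule.finrank_sup_add_finrank_inf_eq V (ℝ ∙ x)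
    have hd : V ⊓ (ℝ ∙ x) = ⊥ := by
      rw [← disjoint_iff, Submodule.disjoint_span_singleton' hx0]
      exact hxV
    rw [hd, finrank_bot, finrank_span_singleton hx0] at this
    omega

end vanish
section fin
variable {E : Type*} [NormedAddCommGroup E] [InnerProductSpace ℝ E] [FiniteDimensional ℝ E]
  [MeasurableSpace E] [BorelSpace E]

lemma eq_zero_of_fourier_slices (a : E) (ha : a ≠ 0) (h : E → ℝ) (hc : Continuous h)
    (heven : ∀ x ∈ sphere (0 : E) 1, h (x - ((2 * ⟪x, a⟫_ℝ) / ‖a‖ ^ 2) • a) = h x)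
    (hz : ∀ ξ : E, ⟪a, ξ⟫_ℝ = 0 → ∫ x in ball (0 : E) 1,
      (h (‖x‖⁻¹ • x) : ℂ) * Complex.exp (⟪‖x‖⁻¹ • x, ξ⟫_ℝ * Complex.I) = 0) :
    ∀ x ∈ sphere (0 : E) 1, h x = 0 := by
  let N : E → E := fun x => ‖x‖⁻¹ • x
  have hN : ∀ x : E, N x ∈ closedBall (0 : E) 1 := by
    intro x
    simp only [N]
    rw [mem_closedBall_zero_iff, norm_smul, norm_inv, norm_norm]
    exact inv_mul_le_one
  have hNm : Measurable N := by fun_prop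
  let P : E → E := fun x => x - (⟪x, a⟫_ℝ / ‖a‖ ^ 2) • a
  have hPc : Continuous P := by fun_prop
  have hna : 0 < ‖a‖ := norm_pos_iff.2 ha
  have bound : ∀ {G : Type} [NormedAddCommGroup G] (q : E → G), Continuous q →
      ∃ C, ∀ x, ‖q (N x)‖ ≤ C := by
    intro G _ q hq
    obtain ⟨C, hC⟩ := (isCompact_closedBall (0 : E) 1).exists_bound_of_continuousOn hq.continuousOn
    exact ⟨C, fun x => hC _ (hN x)⟩
  let l : Measure E := (volume : Measure E).restrict (ball 0 1)
  have hl : IsFiniteMeasure l := ⟨by simpa [l] using measure_ball_lt_top⟩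
  have intg : ∀ {G : Type} [NormedAddCommGroup G] [MeasurableSpace G] [BorelSpace G]
      [SecondCountableTopology G] (q : E → G), Continuous q →
      Integrable (fun x => q (N x)) l := by
    intro G _ _ _ _ q hq
    obtain ⟨C, hC⟩ := bound q hq
    exact Integrable.of_bound (hq.measurable.comp hNm).aestronglyMeasurable C (.of_forall hC)
  let M : (E → ℝ) → Measure E := fun u =>
    (l.withDensity (fun x => ENNReal.ofReal (u (N x)))).map (fun x => P (N x))
  have hMfin : ∀ u : E → ℝ, Continuous u → IsFiniteMeasure (M u) := by
    intro u hu
    have : IsFiniteMeasure (l.withDensity (fun x => ENNReal.ofReal (u (N x)))) :=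
      isFiniteMeasure_withDensity_ofReal (intg u hu).2
    exact Measure.isFiniteMeasure_map _ _
  have hM : ∀ u : E → ℝ, Continuous u → ∀ q : E → ℂ, Continuous q →
      ∫ y, q y ∂(M u) = ∫ x, ((max (u (N x)) 0 : ℝ) : ℂ) * q (P (N x)) ∂l := by
    intro u hu q hq
    simp only [M]
    have hPN : Measurable (fun x => P (N x)) := hPc.measurable.comp hNm
    rw [integral_map hPN.aemeasurable hq.aestronglyMeasurable,
      integral_withDensity_eq_integral_toReal_smul (by
        exact (hu.measurable.comp hNm).ennreal_ofReal) (.of_forall fun x => ENNReal.ofReal_lt_top)]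
    congr 1
  have hdiff : ∀ q : E → ℂ, Continuous q →
      ∫ y, q y ∂(M h) - ∫ y, q y ∂(M (fun x => - h x)) = ∫ x, (h (N x) : ℂ) * q (P (N x)) ∂l := by
    intro q hq
    rw [hM h hc q hq, hM (fun x => - h x) hc.neg q hq, ← integral_sub]
    · congr 1
      ext x
      rw [← sub_mul, ← Complex.ofReal_sub]
      congr 2
      rcases le_total 0 (h (N x)) with h1 | h1
      · rw [max_eq_left h1, max_eq_right (by linarith)]; ring
      · rw [max_eq_right h1, max_eq_left (by linarith)]; ring
    · exact intg (fun y => ((max (h y) 0 : ℝ) : ℂ) * q (P y)) (by fun_prop)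
    · exact intg (fun y => ((max (-h y) 0 : ℝ) : ℂ) * q (P y)) (by fun_prop)
  have hinP : ∀ x t, ⟪P x, t⟫_ℝ = ⟪x, P t⟫_ℝ := by
    intro x t
    simp only [P, inner_sub_left, inner_sub_right, real_inner_smul_left, real_inner_smul_right]
    rw [real_inner_comm t a]; ring
  have haP : ∀ t, ⟪a, P t⟫_ℝ = 0 := by
    intro t
    simp only [P, inner_sub_right, real_inner_smul_right]
    rw [real_inner_self_eq_norm_sq, real_inner_comm t a]; field_simp; ring
  have := hMfin h hc
  have := hMfin (fun x => - h x) hc.neg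
  have hMeq : M h = M (fun x => - h x) := by
    apply Measure.ext_of_charFun
    ext t
    rw [charFun_apply, charFun_apply, ← sub_eq_zero,
      hdiff (fun y => Complex.exp (⟪y, t⟫_ℝ * Complex.I)) (by fun_prop)]
    simp only [hinP]
    exact hz (P t) (haP t)
  let H : E → ℝ := fun y => h (y + Real.sqrt (1 - ‖y‖ ^ 2) • (‖a‖⁻¹ • a))
  have hHc : Continuous H := by fun_prop
  have hHP : ∀ x ∈ sphere (0 : E) 1, H (P x) = h x := by
    intro x hx
    have hx1 : ‖x‖ = 1 := by simpa using hx
    have hn : 1 - ‖P x‖ ^ 2 = (⟪x, a⟫_ℝ / ‖a‖) ^ 2 := by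
      simp only [P]
      rw [norm_sub_sq_real, hx1, norm_smul, real_inner_smul_right, mul_pow, Real.norm_eq_abs, sq_abs]
      field_simp; ring
    simp only [H]
    rw [hn, Real.sqrt_sq_eq_abs]
    rcases le_total 0 (⟪x, a⟫_ℝ / ‖a‖) with h1 | h1
    · rw [abs_of_nonneg h1]
      congr 1
      simp only [P, smul_smul]
      rw [show ⟪x, a⟫_ℝ / ‖a‖ * ‖a‖⁻¹ = ⟪x, a⟫_ℝ / ‖a‖ ^ 2 by field_simp]
      abel
    · rw [abs_of_nonpos h1, ← heven x hx]
      congr 1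
      simp only [P, smul_smul]
      rw [show -(⟪x, a⟫_ℝ / ‖a‖) * ‖a‖⁻¹ = -(⟪x, a⟫_ℝ / ‖a‖ ^ 2) by field_simp]
      rw [mul_div_assoc]
      module
  have hsq : ∫ x, (h (N x)) * H (P (N x)) ∂l = 0 := by
    have h1 := hdiff (fun y => (H y : ℂ)) (by fun_prop)
    rw [hMeq, sub_self] at h1
    have h2 : ∫ x, (h (N x) : ℂ) * (H (P (N x)) : ℂ) ∂l
        = ((∫ x, (h (N x)) * H (P (N x)) ∂l : ℝ) : ℂ) := by
      rw [← integral_complex_ofReal]; simp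
    rw [h2] at h1
    exact_mod_cast h1.symm
  have hNs : ∀ x, x ≠ 0 → N x ∈ sphere (0 : E) 1 := by
    intro x hx
    simp only [N]
    rw [mem_sphere_zero_iff_norm, norm_smul, norm_inv, norm_norm]
    exact inv_mul_cancel₀ (norm_ne_zero_iff.2 hx)
  have hnt : Nontrivial E := ⟨⟨a, 0, ha⟩⟩
  have hne : ∀ᵐ x ∂l, x ≠ 0 := by
    apply ae_restrict_of_ae
    exact Measure.ae_ne volume 0
  have hsq2 : ∫ x, (h (N x)) ^ 2 ∂l = 0 := by
    rw [← hsq]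
    apply integral_congr_ae
    filter_upwards [hne] with x hx
    rw [hHP _ (hNs x hx)]; ring
  have hae : ∀ᵐ x ∂l, h (N x) ^ 2 = 0 :=
    (integral_eq_zero_iff_of_nonneg (fun x => sq_nonneg _)
      (intg (fun y => h y ^ 2) (by fun_prop))).1 hsq2
  intro x hx
  have hx1 : ‖x‖ = 1 := by simpa using hx
  by_contra hne0
  have hNc : ContinuousAt (fun y => h (N y)) ((1 / 2 : ℝ) • x) := by
    have : ContinuousAt N ((1 / 2 : ℝ) • x) := by
      have h0 : ‖(1 / 2 : ℝ) • x‖ ≠ 0 := by rw [norm_smul, hx1]; norm_num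
      exact (continuous_norm.continuousAt.inv₀ h0).smul continuousAt_id
    exact ContinuousAt.comp hc.continuousAt this
  have hval : N ((1 / 2 : ℝ) • x) = x := by
    simp only [N]
    rw [norm_smul, hx1, smul_smul]; norm_num
  have hev : ∀ᶠ y in nhds ((1 / 2 : ℝ) • x), h (N y) ≠ 0 :=
    hNc.eventually_ne (by rw [hval]; exact hne0)
  have hev2 : ∀ᶠ y in nhds ((1 / 2 : ℝ) • x), y ∈ ball (0 : E) 1 :=
    isOpen_ball.mem_nhds (by rw [mem_ball_zero_iff, norm_smul, hx1]; norm_num)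
  have hpos : 0 < volume {y | h (N y) ≠ 0 ∧ y ∈ ball (0 : E) 1} :=
    Measure.measure_pos_of_mem_nhds _ (hev.and hev2)
  rw [ae_restrict_iff' measurableSet_ball, ae_iff] at hae
  refine hpos.ne' (measure_mono_null ?_ hae)
  rintro y ⟨h1, h2⟩ h3
  exact h1 (by simpa using h3 h2)

end fin

lemma slice_finite {E : Type*} [NormedAddCommGroup E] [InnerProductSpace ℝ E]
    [FiniteDimensional ℝ E] [MeasurableSpace E] [BorelSpace E]
    (k : ℕ) (hk : 1 < k) (V : Submodule ℝ E) (hV : Module.finrank ℝ V = k) (v : E) (hv : v ∈ Vᗮ)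
    (hv1 : ‖v‖ < 1) :
    μH[(k : ℝ) - 1] (sphere (0 : E) 1 ∩ (AffineSubspace.mk' v V : Set E)) < ∞ := by
  have h0 : (0 : ℝ) ≤ (k : ℝ) - 1 := by
    have : (1 : ℝ) < k := by exact_mod_cast hk
    linarith
  have hp : 0 < 1 - ‖v‖ ^ 2 := by nlinarith [norm_nonneg v]
  set s := Real.sqrt (1 - ‖v‖ ^ 2) with hs
  have hs0 : 0 < s := Real.sqrt_pos.2 hp
  have hs2 : s ^ 2 = 1 - ‖v‖ ^ 2 := Real.sq_sqrt hp.le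
  let φ : V → E := fun u => v + s • (u : E)
  have hφ : LipschitzWith ⟨s, hs0.le⟩ φ := by
    apply LipschitzWith.of_dist_le_mul
    intro x y
    simp only [φ, dist_add_left, dist_smul₀, Real.norm_of_nonneg hs0.le]
    exact le_rfl
  have hsub : sphere (0 : E) 1 ∩ (AffineSubspace.mk' v V : Set E) ⊆ φ '' sphere 0 1 := by
    rintro x ⟨hx1, hx2⟩
    have hx1 : ‖x‖ = 1 := by simpa using hx1
    have hx2 : x - v ∈ V := by simpa using hx2
    have hnn : ‖x - v‖ ^ 2 = s ^ 2 := by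
      have h1 : ‖x‖ ^ 2 = ‖x - v‖ ^ 2 + ‖v‖ ^ 2 := by
        conv_lhs => rw [show x = (x - v) + v by abel]
        rw [norm_add_sq_real, Submodule.inner_right_of_mem_orthogonal hx2 hv]; ring
      rw [hx1] at h1; linarith
    have hn : ‖x - v‖ = s := (sq_eq_sq₀ (norm_nonneg _) hs0.le).1 hnn
    refine ⟨s⁻¹ • ⟨x - v, hx2⟩, ?_, ?_⟩
    · rw [mem_sphere_zero_iff_norm, norm_smul, norm_inv, Real.norm_of_nonneg hs0.le]
      change s⁻¹ * ‖x - v‖ = 1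
      rw [hn, inv_mul_cancel₀ hs0.ne']
    · change v + s • (s⁻¹ • (x - v)) = x
      rw [smul_smul, mul_inv_cancel₀ hs0.ne', one_smul]; abel
  refine (measure_mono hsub).trans_lt ((hφ.hausdorffMeasure_image_le h0 _).trans_lt ?_)
  exact ENNReal.mul_lt_top (ENNReal.rpow_lt_top_of_nonneg h0 ENNReal.coe_ne_top)
    (sphere_finite k hk hV)

/-- Injectivity of the parallel slice transform on even functions:
if `f, g` are continuous on `S^n`, invariant under the reflection `R_a`, and have equal
integrals over all sections of `S^n` by `k`-planes parallel to `a` meeting the open unit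
ball, then `f = g` on `S^n`. -/
theorem statement2 (n k : ℕ) (hn : 2 ≤ n) (hk : 1 < k) (hkn : k ≤ n)
    (a : Euc (n + 1)) (ha : a ≠ 0)
    (f g : Euc (n + 1) → ℝ)
    (hf : ContinuousOn f (sphere (0 : Euc (n + 1)) 1))
    (hg : ContinuousOn g (sphere (0 : Euc (n + 1)) 1))
    (hfeven : ∀ x ∈ sphere (0 : Euc (n + 1)) 1, f (reflMap a x) = f x)
    (hgeven : ∀ x ∈ sphere (0 : Euc (n + 1)) 1, g (reflMap a x) = g x)
    (heq : ∀ ζ : AffineSubspace ℝ (Euc (n + 1)),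
        Module.finrank ℝ ζ.direction = k → a ∈ ζ.direction →
        (∃ z ∈ ζ, ‖z‖ < 1) →
        (∫ x in sphere (0 : Euc (n + 1)) 1 ∩ (ζ : Set (Euc (n + 1))),
          f x ∂μH[(k : ℝ) - 1]) =
        ∫ x in sphere (0 : Euc (n + 1)) 1 ∩ (ζ : Set (Euc (n + 1))),
          g x ∂μH[(k : ℝ) - 1]) :
    ∀ x ∈ sphere (0 : Euc (n + 1)) 1, f x = g x := by
  have hclosed : IsClosed (sphere (0 : Euc (n + 1)) 1) := isClosed_sphere
  let h0 : C(sphere (0 : Euc (n + 1)) 1, ℝ) :=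
    ⟨(sphere (0 : Euc (n + 1)) 1).domRestrict (fun x => f x - g x),
      (hf.sub hg).domRestrict⟩
  obtain ⟨h, hh⟩ := ContinuousMap.exists_restrict_eq hclosed h0
  have hval : ∀ x ∈ sphere (0 : Euc (n + 1)) 1, h x = f x - g x := by
    intro x hx
    have := congrArg (fun u => u ⟨x, hx⟩) hh
    exact this
  have hk0 : (0 : ℝ) ≤ (k : ℝ) - 1 := by
    have : (1 : ℝ) < k := by exact_mod_cast hk
    linarith
  have hrefl : ∀ x ∈ sphere (0 : Euc (n + 1)) 1, reflMap a x ∈ sphere (0 : Euc (n + 1)) 1 := by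
    intro x hx
    have hx1 : ‖x‖ = 1 := by simpa using hx
    have hna : 0 < ‖a‖ := norm_pos_iff.2 ha
    rw [mem_sphere_zero_iff_norm, ← sq_eq_sq₀ (norm_nonneg _) zero_le_one]
    simp only [reflMap]
    rw [norm_sub_sq_real, hx1, norm_smul, real_inner_smul_right, mul_pow, Real.norm_eq_abs, sq_abs]
    field_simp; ring
  have hzero := eq_zero_of_fourier_slices a ha h h.continuous (by
    intro x hx
    have h1 := hval _ (hrefl x hx)
    rw [hfeven x hx, hgeven x hx, ← hval x hx] at h1
    exact h1) (by
    intro ξ hξ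
    have hfr : Module.finrank ℝ (Euc (n + 1)) = n + 1 := by simp
    have : Fact (Module.finrank ℝ (Euc (n + 1)) = n + 1) := ⟨hfr⟩
    obtain ⟨V, hV1, hV2, hV3⟩ := exists_submodule_between k (ℝ ∙ a) (ℝ ∙ ξ)ᗮ (by
        rw [Submodule.span_singleton_le_iff_mem,
          Submodule.mem_orthogonal_singleton_iff_inner_left]
        exact hξ) (by rw [finrank_span_singleton ha]; omega) (by
        by_cases h0 : ξ = 0
        · have htop : (ℝ ∙ ξ)ᗮ = (⊤ : Submodule ℝ (Euc (n + 1))) := by rw [h0]; simp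
          rw [htop, finrank_top, hfr]
          omega
        · exact hkn.trans (Submodule.finrank_orthogonal_span_singleton (n := n) h0).ge)
    refine vanish k hk V hV3 ξ (fun x hx =>
      Submodule.mem_orthogonal_singleton_iff_inner_left.1 (hV2 hx)) h h.continuous ?_
    intro v hv hv1
    have hdir : (AffineSubspace.mk' v V).direction = V := AffineSubspace.direction_mk' v V
    have hh1 := heq (AffineSubspace.mk' v V) (by rw [hdir]; exact hV3)
      (by rw [hdir]; exact hV1 (Submodule.mem_span_singleton_self a))
      ⟨v, AffineSubspace.self_mem_mk' v V, hv1⟩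
    have hcl : IsClosed (sphere (0 : Euc (n + 1)) 1 ∩ (AffineSubspace.mk' v V : Set (Euc (n + 1)))) :=
      isClosed_sphere.inter (AffineSubspace.closed_of_finiteDimensional _)
    have hcpt : IsCompact (sphere (0 : Euc (n + 1)) 1 ∩
        (AffineSubspace.mk' v V : Set (Euc (n + 1)))) :=
      (isCompact_sphere _ _).inter_right (AffineSubspace.closed_of_finiteDimensional _)
    have hfin := slice_finite k hk V hV3 v hv hv1
    have hint : ∀ u : Euc (n + 1) → ℝ, ContinuousOn u (sphere (0 : Euc (n + 1)) 1) →
        IntegrableOn u (sphere (0 : Euc (n + 1)) 1 ∩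
          (AffineSubspace.mk' v V : Set (Euc (n + 1)))) μH[(k : ℝ) - 1] := by
      intro u hu
      have hu2 := hu.mono (Set.inter_subset_left
        (t := (AffineSubspace.mk' v V : Set (Euc (n + 1)))))
      obtain ⟨C, hC⟩ := hcpt.exists_bound_of_continuousOn hu2
      exact IntegrableOn.of_bound hfin (hu2.aestronglyMeasurable hcl.measurableSet) C
        (by filter_upwards [ae_restrict_mem hcl.measurableSet] with x hx using hC x hx)
    rw [setIntegral_congr_fun hcl.measurableSet (fun x hx => hval x hx.1),
      integral_sub (hint f hf) (hint g hg), hh1, sub_self])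
  intro x hx
  have h1 := hzero x hx
  rw [hval x hx] at h1
  linarith
end

section
/- Let n ≥ 1 and let a ∈ ℝ^{n+1} with |a| > 1. Then for every x ∈ S^n, τ_a x = φ_{a*}( R_a ( φ_{a*} x ) ), where τ_a x = ((|a|² − 1) x + 2(1 − x·a) a)/|x − a|². (For x ∈ S^n one automatically has x·a* ≠ 1 and (R_a φ_{a*} x)·a* ≠ 1, so all maps are defined.) -/
open MeasureTheory Metric Matrix
open scoped InnerProductSpace ENNReal

theorem phi_formula {n : ℕ} (a y : Euc (n + 1)) (s : ℝ) (ha : 1 < ‖a‖)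
    (hs : s = Real.sqrt (1 - ‖aStar a‖ ^ 2)) :
    phiMap (aStar a) y = (1 - ⟪y, a⟫_ℝ / ‖a‖ ^ 2)⁻¹ •
      (((1 - ⟪y, a⟫_ℝ + s * ⟪y, a⟫_ℝ) / ‖a‖ ^ 2) • a - s • y) := by
  have h0 : ‖a‖ ≠ 0 := by linarith
  have h1 : ⟪y, aStar a⟫_ℝ = ⟪y, a⟫_ℝ / ‖a‖ ^ 2 := by
    rw [aStar, real_inner_smul_right]; field_simp
  have h2 : ‖aStar a‖ ^ 2 = (‖a‖ ^ 2)⁻¹ := by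
    rw [aStar, norm_smul, Real.norm_eq_abs, mul_pow, sq_abs]; field_simp
  rw [phiMap, ← hs, real_inner_comm y (aStar a), h1, h2]
  congr 1
  rw [aStar]
  match_scalars <;> field_simp
  ring

/-- Lemma 4.2: for `|a| > 1` and `x ∈ S^n`,
`τ_a x = φ_{a*}(R_a(φ_{a*} x))`; moreover all the intermediate values are defined,
i.e. `x·a* ≠ 1` and `(R_a φ_{a*} x)·a* ≠ 1`. -/
theorem statement5 (n : ℕ) (hn : 1 ≤ n)
    (a : Euc (n + 1)) (ha : 1 < ‖a‖) :
    ∀ x ∈ sphere (0 : Euc (n + 1)) 1,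
      ⟪x, aStar a⟫_ℝ ≠ 1 ∧
      ⟪reflMap a (phiMap (aStar a) x), aStar a⟫_ℝ ≠ 1 ∧
      tauMap a x = phiMap (aStar a) (reflMap a (phiMap (aStar a) x)) := by
  intro x hx
  have hx1 : ‖x‖ = 1 := by simpa using hx
  have h0 : ‖a‖ ≠ 0 := by linarith
  obtain ⟨s, hs⟩ : ∃ s, s = Real.sqrt (1 - ‖aStar a‖ ^ 2) := ⟨_, rfl⟩
  have h2 : ‖aStar a‖ ^ 2 = (‖a‖ ^ 2)⁻¹ := by
    rw [aStar, norm_smul, Real.norm_eq_abs, mul_pow, sq_abs]; field_simp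
  have hA1 : 1 < ‖a‖ ^ 2 := by nlinarith
  have hs2 : s ^ 2 = 1 - (‖a‖ ^ 2)⁻¹ := by
    rw [hs, h2, Real.sq_sqrt]
    have := inv_lt_one_of_one_lt₀ hA1
    linarith
  have hin : ∀ y : Euc (n + 1), ⟪y, aStar a⟫_ℝ = ⟪y, a⟫_ℝ / ‖a‖ ^ 2 := by
    intro y
    rw [aStar, real_inner_smul_right]; field_simp
  have ht : ⟪x, a⟫_ℝ ≤ ‖a‖ := by
    have := real_inner_le_norm x a
    rwa [hx1, one_mul] at this
  have hnorm : ‖x - a‖ ^ 2 = ‖a‖ ^ 2 + 1 - 2 * ⟪x, a⟫_ℝ := by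
    rw [norm_sub_sq_real, hx1]; ring
  have hAt : 0 < ‖a‖ ^ 2 - ⟪x, a⟫_ℝ := by nlinarith
  have hD : 0 < ‖a‖ ^ 2 + 1 - 2 * ⟪x, a⟫_ℝ := by nlinarith
  have haa : ⟪a, a⟫_ℝ = ‖a‖ ^ 2 := real_inner_self_eq_norm_sq a
  have hphi := phi_formula a x s ha hs
  have hpa : ⟪phiMap (aStar a) x, a⟫_ℝ
      = ‖a‖ ^ 2 * (1 - ⟪x, a⟫_ℝ) / (‖a‖ ^ 2 - ⟪x, a⟫_ℝ) := by
    rw [hphi, real_inner_smul_left, inner_sub_left, real_inner_smul_left,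
      real_inner_smul_left, haa]
    generalize ⟪x, a⟫_ℝ = t at *
    generalize ‖a‖ ^ 2 = A at *
    have : A ≠ 0 := by linarith
    have : A - t ≠ 0 := hAt.ne'
    have h3 : 1 - t / A = (A - t) / A := by field_simp
    rw [h3]
    field_simp
    ring
  have hR : reflMap a (phiMap (aStar a) x) =
      ((⟪x, a⟫_ℝ - 1 + s * ⟪x, a⟫_ℝ) / (‖a‖ ^ 2 - ⟪x, a⟫_ℝ)) • a
        - (s * ‖a‖ ^ 2 / (‖a‖ ^ 2 - ⟪x, a⟫_ℝ)) • x := by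
    rw [reflMap, hpa, hphi]
    generalize ⟪x, a⟫_ℝ = t at *
    generalize ‖a‖ ^ 2 = A at *
    have : A ≠ 0 := by linarith
    have : A - t ≠ 0 := hAt.ne'
    have h3 : 1 - t / A = (A - t) / A := by field_simp
    rw [h3]
    match_scalars <;> field_simp
    ring
  have hRa : ⟪reflMap a (phiMap (aStar a) x), a⟫_ℝ
      = - (‖a‖ ^ 2 * (1 - ⟪x, a⟫_ℝ) / (‖a‖ ^ 2 - ⟪x, a⟫_ℝ)) := by
    rw [hR, inner_sub_left, real_inner_smul_left, real_inner_smul_left, haa]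
    have : ‖a‖ ^ 2 - ⟪x, a⟫_ℝ ≠ 0 := hAt.ne'
    field_simp
    ring
  refine ⟨?_, ?_, ?_⟩
  · rw [hin, Ne, div_eq_one_iff_eq (by positivity)]
    linarith
  · rw [hin, hRa, Ne, div_eq_one_iff_eq (by positivity)]
    intro h
    have h4 : ‖a‖ ^ 2 * (‖a‖ ^ 2 + 1 - 2 * ⟪x, a⟫_ℝ) = 0 := by
      have : ‖a‖ ^ 2 - ⟪x, a⟫_ℝ ≠ 0 := hAt.ne'
      rw [← neg_div, div_eq_iff this] at h
      linarith
    have : 0 < ‖a‖ ^ 2 * (‖a‖ ^ 2 + 1 - 2 * ⟪x, a⟫_ℝ) := by positivity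
    linarith
  · rw [phi_formula a _ s ha hs, hRa, hR, tauMap, hnorm]
    clear hRa hR hpa hphi haa hnorm hin hs h2
    generalize ⟪x, a⟫_ℝ = t at *
    generalize ‖a‖ ^ 2 = A at *
    have hA : A ≠ 0 := by linarith
    have hAt' : A - t ≠ 0 := hAt.ne'
    have hD' : A + 1 - 2 * t ≠ 0 := hD.ne'
    have h3 : 1 - -(A * (1 - t) / (A - t)) / A = (A + 1 - 2 * t) / (A - t) := by
      field_simp; ring
    have hs3 : A * s ^ 2 = A - 1 := by rw [hs2]; field_simp
    rw [h3]
    match_scalars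
    · field_simp
      linear_combination -hs3
    · field_simp
      linear_combination (t) * hs3
end

section
/- Let n ≥ 1, let k be an integer with 1 < k ≤ n, and let a ∈ ℝ^{n+1} with |a| > 1. Define, for a function f on S^n, (W_a f)(x) = ρ_{a*}(x) f(τ_a x), where ρ_{a*}(x) = ( (|a|² − 1)/|a − x|² )^{k−1} and τ_a x = ((|a|² − 1) x + 2(1 − x·a) a)/|x − a|². Then W_a is an involution: (W_a (W_a f))(x) = f(x) for every f : S^n → ℝ and every x ∈ S^n. -/
open MeasureTheory Metric Matrix
open scoped InnerProductSpace ENNReal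

/-- `(W_a f)(x) = ρ_{a*}(x) f(τ_a x)` with `ρ_{a*}(x) = ((|a|²−1)/|a−x|²)^{k−1}`. -/
noncomputable def Wop {n : ℕ} (k : ℕ) (a : Euc (n + 1)) (f : Euc (n + 1) → ℝ)
    (x : Euc (n + 1)) : ℝ :=
  ((‖a‖ ^ 2 - 1) / ‖a - x‖ ^ 2) ^ (k - 1) * f (tauMap a x)

/-- `τ_a x` is the image of `x` under a homothety centred at `a`. -/
lemma tauMap_eq {n : ℕ} (a x : Euc (n + 1)) (hx : ‖x‖ = 1) (hD : ‖x - a‖ ^ 2 ≠ 0) :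
    tauMap a x = a + ((‖a‖ ^ 2 - 1) / ‖x - a‖ ^ 2) • (x - a) := by
  have h1 : ‖x - a‖ ^ 2 = 1 - 2 * ⟪x, a⟫_ℝ + ‖a‖ ^ 2 := by
    rw [norm_sub_sq_real, hx]; ring
  have h2 : (‖x - a‖ ^ 2)⁻¹ * (2 * (1 - ⟪x, a⟫_ℝ)) = 1 - (‖a‖ ^ 2 - 1) / ‖x - a‖ ^ 2 := by
    rw [eq_sub_iff_add_eq, div_eq_inv_mul, ← mul_add, inv_mul_eq_one₀ hD, h1]; ring
  unfold tauMap
  rw [smul_add, smul_smul, smul_smul, h2, div_eq_inv_mul]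
  module

/-- Lemma 5.2: `W_a` is an involution on functions on `S^n`:
`W_a(W_a f) = f` pointwise on the sphere. -/
theorem statement7 (n k : ℕ) (hn : 1 ≤ n) (hk1 : 1 < k) (hkn : k ≤ n)
    (a : Euc (n + 1)) (ha : 1 < ‖a‖)
    (f : Euc (n + 1) → ℝ) :
    ∀ x ∈ sphere (0 : Euc (n + 1)) 1, Wop k a (Wop k a f) x = f x := by
  intro x hx
  have hx1 : ‖x‖ = 1 := by simpa using hx
  have hA : 0 < ‖a‖ ^ 2 - 1 := by nlinarith
  have hne : x - a ≠ 0 := by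
    intro h
    rw [sub_eq_zero] at h
    rw [h] at hx1; linarith
  have hD : 0 < ‖x - a‖ ^ 2 := by positivity
  have h1 : ‖x - a‖ ^ 2 = 1 - 2 * ⟪x, a⟫_ℝ + ‖a‖ ^ 2 := by
    rw [norm_sub_sq_real, hx1]; ring
  have hy := tauMap_eq a x hx1 hD.ne'
  obtain ⟨c, hc⟩ : ∃ c, c = (‖a‖ ^ 2 - 1) / ‖x - a‖ ^ 2 := ⟨_, rfl⟩
  have hcpos : 0 < c := by rw [hc]; positivity
  have hcD : c * ‖x - a‖ ^ 2 = ‖a‖ ^ 2 - 1 := by rw [hc]; field_simp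
  rw [← hc] at hy
  have hya : tauMap a x - a = c • (x - a) := by rw [hy]; abel
  have hD2 : ‖tauMap a x - a‖ ^ 2 = c * (‖a‖ ^ 2 - 1) := by
    rw [hya, norm_smul, mul_pow, Real.norm_eq_abs, sq_abs, ← hcD]; ring
  have hin : ⟪tauMap a x, a⟫_ℝ = ‖a‖ ^ 2 + c * (⟪x, a⟫_ℝ - ‖a‖ ^ 2) := by
    rw [hy, inner_add_left, real_inner_smul_left, inner_sub_left, real_inner_self_eq_norm_sq]
  have hyn : ‖tauMap a x‖ = 1 := by
    have h3 := norm_sub_sq_real (tauMap a x) a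
    rw [hD2, hin] at h3
    rw [h1] at hcD
    have h4 : ‖tauMap a x‖ ^ 2 = 1 := by nlinarith
    exact (pow_eq_one_iff_of_nonneg (norm_nonneg _) two_ne_zero).1 h4
  have hcc : (‖a‖ ^ 2 - 1) / ‖tauMap a x - a‖ ^ 2 = c⁻¹ := by
    rw [hD2]; field_simp
  have htt : tauMap a (tauMap a x) = x := by
    rw [tauMap_eq a _ hyn (by rw [hD2]; positivity), hcc, hya, smul_smul,
      inv_mul_cancel₀ hcpos.ne']
    module
  unfold Wop
  rw [htt, norm_sub_rev a x, norm_sub_rev a (tauMap a x), hcc, ← hc, ← mul_assoc, ← mul_pow,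
    mul_inv_cancel₀ hcpos.ne', one_pow, one_mul]
end
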